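/- Let S be a quasi-hereditary algebra with a simple-preserving duality ° satisfying strong property A and with gfd(S) = 1. Then for every finite-dimensional S-module Q with gfd(Q) = 1 one has Ext^2_S(Q°, Q) ≠ 0. -/

import Mathlib

/-!
Common definitions for formalizing "On the global and ∇-filtration dimensions of
quasi-hereditary algebras" by Erdmann and Parker.

We work with a finite-dimensional algebra `S` over a field `k`; since `S` is
finite dimensional over `k`, the finite-dimensional `S`-modules are exactly the
finitely generated ones, so we express finite-dimensionality of a module `M` as
`Module.Finite S M`.
-/

open CategoryTheory

namespace QHPaper

variable (S : Type) [Ring S]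

/-- The subquotient `B ⧸ A` associated to two submodules `A B` of `M`. -/
abbrev subquot {M : ModuleCat.{0} S} (A B : Submodule S ↥M) : Type :=
  ↥B ⧸ (Submodule.comap B.subtype A)

/-- A filtration `⊥ = f 0 ≤ f 1 ≤ ⋯ ≤ f n = ⊤` of `M` whose `i`-th section
`f (i+1) / f i` is isomorphic to the prescribed module `D i`. -/
def HasFiltrationWithSections (M : ModuleCat.{0} S) (n : ℕ)
    (f : Fin (n + 1) → Submodule S ↥M) (D : Fin n → ModuleCat.{0} S) : Prop :=
  Monotone f ∧ f 0 = ⊥ ∧ f (Fin.last n) = ⊤ ∧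
    ∀ i : Fin n, Nonempty ((subquot S (f i.castSucc) (f i.succ)) ≃ₗ[S] ↥(D i))

/-- `L` occurs as a (simple) subquotient of `M`; for `L` simple this says that `L`
is a composition factor of `M`. -/
def IsCompFactor (L M : ModuleCat.{0} S) : Prop :=
  ∃ (A B : Submodule S ↥M), A ≤ B ∧ Nonempty ((subquot S A B) ≃ₗ[S] ↥L)

/-- `L` occurs with multiplicity `m` among the sections of a composition series of `M`. -/
def CompFactorMult (L M : ModuleCat.{0} S) (m : ℕ) : Prop :=
  ∃ (n : ℕ) (f : Fin (n + 1) → Submodule S ↥M),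
    Monotone f ∧ f 0 = ⊥ ∧ f (Fin.last n) = ⊤ ∧
    (∀ i : Fin n, IsSimpleModule S (subquot S (f i.castSucc) (f i.succ))) ∧
    Nat.card {i : Fin n // Nonempty ((subquot S (f i.castSucc) (f i.succ)) ≃ₗ[S] ↥L)} = m

/-- `P` is a projective cover of `M`: `P` is projective and there is a surjection
`P → M` whose kernel is superfluous in `P`. -/
def IsProjCover (P M : ModuleCat.{0} S) : Prop :=
  Module.Projective S ↥P ∧ ∃ π : ↥P →ₗ[S] ↥M, Function.Surjective π ∧
    ∀ N : Submodule S ↥P, N ⊔ LinearMap.ker π = ⊤ → N = ⊤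

/-- `I` is an injective hull of `M`: `I` is injective and there is an injection
`M → I` with essential image. -/
def IsInjHull (I M : ModuleCat.{0} S) : Prop :=
  Module.Injective S ↥I ∧ ∃ ι : ↥M →ₗ[S] ↥I, Function.Injective ι ∧
    ∀ N : Submodule S ↥I, N ⊓ LinearMap.range ι = ⊥ → N = ⊥

/-- The data of a quasi-hereditary algebra structure on `S` with weight poset `Λ`:
a full set `L` of pairwise non-isomorphic simple modules, their projective covers `P`
and injective hulls `I`, the standard modules `std` (largest quotient of `P lam` with
all composition factors `L mu`, `mu ≤ lam`), the costandard modules `costd`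
(largest submodule of `I lam` with all composition factors `L mu`, `mu ≤ lam`),
such that `L lam` occurs exactly once in `std lam` and `P lam` is filtered by
standard modules `std mu` with `mu ≥ lam`, with `std lam` occurring exactly once. -/
structure QHData (Λ : Type) [Fintype Λ] [PartialOrder Λ] where
  L : Λ → ModuleCat.{0} S
  P : Λ → ModuleCat.{0} S
  I : Λ → ModuleCat.{0} S
  std : Λ → ModuleCat.{0} S
  costd : Λ → ModuleCat.{0} S
  finiteL : ∀ lam, Module.Finite S ↥(L lam)
  simpleL : ∀ lam, IsSimpleModule S ↥(L lam)
  nonisoL : ∀ lam mu, lam ≠ mu → IsEmpty (↥(L lam) ≃ₗ[S] ↥(L mu))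
  fullL : ∀ M : ModuleCat.{0} S, IsSimpleModule S ↥M → ∃ lam, Nonempty (↥M ≃ₗ[S] ↥(L lam))
  projCover : ∀ lam, IsProjCover S (P lam) (L lam)
  injHull : ∀ lam, IsInjHull S (I lam) (L lam)
  stdSpec : ∀ lam, ∃ K : Submodule S ↥(P lam),
    Nonempty (↥(std lam) ≃ₗ[S] (↥(P lam) ⧸ K)) ∧
    (∀ mu, IsCompFactor S (L mu) (ModuleCat.of S (↥(P lam) ⧸ K)) → mu ≤ lam) ∧
    ∀ K' : Submodule S ↥(P lam),
      (∀ mu, IsCompFactor S (L mu) (ModuleCat.of S (↥(P lam) ⧸ K')) → mu ≤ lam) → K ≤ K'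
  costdSpec : ∀ lam, ∃ V : Submodule S ↥(I lam),
    Nonempty (↥(costd lam) ≃ₗ[S] ↥V) ∧
    (∀ mu, IsCompFactor S (L mu) (ModuleCat.of S ↥V) → mu ≤ lam) ∧
    ∀ V' : Submodule S ↥(I lam),
      (∀ mu, IsCompFactor S (L mu) (ModuleCat.of S ↥V') → mu ≤ lam) → V' ≤ V
  multOne : ∀ lam, CompFactorMult S (L lam) (std lam) 1
  projFilt : ∀ lam, ∃ (n : ℕ) (f : Fin (n + 1) → Submodule S ↥(P lam)) (g : Fin n → Λ),
    HasFiltrationWithSections S (P lam) n f (fun i => std (g i)) ∧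
    (∀ i, lam ≤ g i) ∧ Nat.card {i : Fin n // g i = lam} = 1

variable {Λ : Type} [Fintype Λ] [PartialOrder Λ]

/-- `M` has a filtration with costandard sections, i.e. `M ∈ F(∇)`. -/
def InCostdFilt (Q : QHData S Λ) (M : ModuleCat.{0} S) : Prop :=
  ∃ (n : ℕ) (f : Fin (n + 1) → Submodule S ↥M) (g : Fin n → Λ),
    HasFiltrationWithSections S M n f (fun i => Q.costd (g i))

/-- `M` has a filtration with standard sections, i.e. `M ∈ F(Δ)`. -/
def InStdFilt (Q : QHData S Λ) (M : ModuleCat.{0} S) : Prop :=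
  ∃ (n : ℕ) (f : Fin (n + 1) → Submodule S ↥M) (g : Fin n → Λ),
    HasFiltrationWithSections S M n f (fun i => Q.std (g i))

/-- `0 → N 0 → N 1 → ⋯ → N (n+1) → 0` is exact. -/
def IsExactSeq (n : ℕ) (N : Fin (n + 2) → ModuleCat.{0} S)
    (f : ∀ i : Fin (n + 1), ↥(N i.castSucc) →ₗ[S] ↥(N i.succ)) : Prop :=
  Function.Injective (f 0) ∧ Function.Surjective (f (Fin.last n)) ∧
    ∀ i : Fin n, LinearMap.range (f i.castSucc) = LinearMap.ker (f i.succ)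

/-- `M` has a ∇-resolution (co-resolution by modules in `F(∇)`) of length `d`:
`0 → M → M₀ → ⋯ → M_d → 0` with each `Mᵢ ∈ F(∇)`. -/
def GfdLE (Q : QHData S Λ) (M : ModuleCat.{0} S) (d : ℕ) : Prop :=
  ∃ (N : Fin (d + 2) → ModuleCat.{0} S)
    (f : ∀ i : Fin (d + 1), ↥(N i.castSucc) →ₗ[S] ↥(N i.succ)),
    IsExactSeq S d N f ∧ N 0 = M ∧ ∀ i : Fin (d + 1), InCostdFilt S Q (N i.succ)

/-- The ∇-filtration dimension (good filtration dimension) of a module. -/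
noncomputable def gfd (Q : QHData S Λ) (M : ModuleCat.{0} S) : ℕ :=
  sInf {d | GfdLE S Q M d}

/-- `M` has a resolution `0 → M_d → ⋯ → M₀ → M → 0` with each `Mᵢ ∈ F(Δ)`. -/
def WfdLE (Q : QHData S Λ) (M : ModuleCat.{0} S) (d : ℕ) : Prop :=
  ∃ (N : Fin (d + 2) → ModuleCat.{0} S)
    (f : ∀ i : Fin (d + 1), ↥(N i.castSucc) →ₗ[S] ↥(N i.succ)),
    IsExactSeq S d N f ∧ N (Fin.last (d + 1)) = M ∧
    ∀ i : Fin (d + 1), InStdFilt S Q (N i.castSucc)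

/-- The Δ-filtration dimension of a module. -/
noncomputable def wfd (Q : QHData S Λ) (M : ModuleCat.{0} S) : ℕ :=
  sInf {d | WfdLE S Q M d}

/-- `M` has a projective resolution of length `d`. -/
def ProjdimLE (M : ModuleCat.{0} S) (d : ℕ) : Prop :=
  ∃ (N : Fin (d + 2) → ModuleCat.{0} S)
    (f : ∀ i : Fin (d + 1), ↥(N i.castSucc) →ₗ[S] ↥(N i.succ)),
    IsExactSeq S d N f ∧ N (Fin.last (d + 1)) = M ∧
    ∀ i : Fin (d + 1), Module.Projective S ↥(N i.castSucc)

/-- The projective dimension of a module. -/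
noncomputable def projdim (M : ModuleCat.{0} S) : ℕ :=
  sInf {d | ProjdimLE S M d}

/-- `M` has an injective resolution of length `d`. -/
def InjdimLE (M : ModuleCat.{0} S) (d : ℕ) : Prop :=
  ∃ (N : Fin (d + 2) → ModuleCat.{0} S)
    (f : ∀ i : Fin (d + 1), ↥(N i.castSucc) →ₗ[S] ↥(N i.succ)),
    IsExactSeq S d N f ∧ N 0 = M ∧
    ∀ i : Fin (d + 1), Module.Injective S ↥(N i.succ)

/-- The injective dimension of a module. -/
noncomputable def injdim (M : ModuleCat.{0} S) : ℕ :=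
  sInf {d | InjdimLE S M d}

/-- `gfd(S)`: the supremum of the ∇-filtration dimensions of all
finite-dimensional `S`-modules. -/
noncomputable def gfdAlg (Q : QHData S Λ) : ℕ :=
  sSup {d | ∃ M : ModuleCat.{0} S, Module.Finite S ↥M ∧ gfd S Q M = d}

/-- `wfd(S)`: the supremum of the Δ-filtration dimensions of all
finite-dimensional `S`-modules. -/
noncomputable def wfdAlg (Q : QHData S Λ) : ℕ :=
  sSup {d | ∃ M : ModuleCat.{0} S, Module.Finite S ↥M ∧ wfd S Q M = d}

/-- The global dimension of `S`: the supremum of the projective dimensions of all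
finite-dimensional `S`-modules. -/
noncomputable def globdim : ℕ :=
  sSup {d | ∃ M : ModuleCat.{0} S, Module.Finite S ↥M ∧ projdim S M = d}

/-- `Ext^n_S(A, B) ≠ 0`. -/
noncomputable def extNe (A B : ModuleCat.{0} S) (n : ℕ) : Prop :=
  Nontrivial ↥(((Ext ℤ (ModuleCat.{0} S) n).obj (Opposite.op A)).obj B)

/-- A simple-preserving duality on `S`: a contravariant, exact, fully faithful,
additive self-functor `D` on the category of finite-dimensional `S`-modules with
`D (D M) ≅ M` and `D (L lam) ≅ L lam` for all `lam`. -/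
structure Duality (Q : QHData S Λ) where
  D : ModuleCat.{0} S → ModuleCat.{0} S
  Dmap : ∀ {A B : ModuleCat.{0} S}, (↥A →ₗ[S] ↥B) → (↥(D B) →ₗ[S] ↥(D A))
  finD : ∀ M : ModuleCat.{0} S, Module.Finite S ↥M → Module.Finite S ↥(D M)
  Did : ∀ A : ModuleCat.{0} S, Module.Finite S ↥A →
    Dmap (LinearMap.id : ↥A →ₗ[S] ↥A) = LinearMap.id
  Dcomp : ∀ {A B C : ModuleCat.{0} S}, Module.Finite S ↥A → Module.Finite S ↥B →
    Module.Finite S ↥C → ∀ (f : ↥A →ₗ[S] ↥B) (g : ↥B →ₗ[S] ↥C),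
      Dmap (g ∘ₗ f) = Dmap f ∘ₗ Dmap g
  Dadd : ∀ {A B : ModuleCat.{0} S}, Module.Finite S ↥A → Module.Finite S ↥B →
    ∀ (f g : ↥A →ₗ[S] ↥B), Dmap (f + g) = Dmap f + Dmap g
  Dfull : ∀ {A B : ModuleCat.{0} S}, Module.Finite S ↥A → Module.Finite S ↥B →
    Function.Bijective (fun f : ↥A →ₗ[S] ↥B => Dmap f)
  Dexact : ∀ {A B C : ModuleCat.{0} S}, Module.Finite S ↥A → Module.Finite S ↥B →
    Module.Finite S ↥C → ∀ (f : ↥A →ₗ[S] ↥B) (g : ↥B →ₗ[S] ↥C),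
      Function.Injective f → Function.Surjective g →
      LinearMap.range f = LinearMap.ker g →
      Function.Injective (Dmap g) ∧ Function.Surjective (Dmap f) ∧
        LinearMap.range (Dmap g) = LinearMap.ker (Dmap f)
  Dinvol : ∀ M : ModuleCat.{0} S, Module.Finite S ↥M → Nonempty (↥(D (D M)) ≃ₗ[S] ↥M)
  DL : ∀ lam, Nonempty (↥(D (Q.L lam)) ≃ₗ[S] ↥(Q.L lam))

/-- Strong property A: `mu < lam` implies `gfd (L mu) < gfd (L lam)`. -/
def StrongPropA (Q : QHData S Λ) : Prop :=
  ∀ mu lam : Λ, mu < lam → gfd S Q (Q.L mu) < gfd S Q (Q.L lam)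

/-- Property A: `mu < lam` implies `gfd (L mu) ≤ gfd (L lam)`. -/
def PropA (Q : QHData S Λ) : Prop :=
  ∀ mu lam : Λ, mu < lam → gfd S Q (Q.L mu) ≤ gfd S Q (Q.L lam)

/-- Property B: `mu < lam` implies `wfd (∇ mu) ≤ wfd (∇ lam)`. -/
def PropB (Q : QHData S Λ) : Prop :=
  ∀ mu lam : Λ, mu < lam → wfd S Q (Q.costd mu) ≤ wfd S Q (Q.costd lam)

/-- Property C: `wfd (∇ lam) = gfd S - inj (∇ lam)` for all `lam`. -/
def PropC (Q : QHData S Λ) : Prop :=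
  ∀ lam : Λ, wfd S Q (Q.costd lam) = gfdAlg S Q - injdim S (Q.costd lam)

/-- Property D: `wfd (∇ lam) = wfd (L lam)` for all `lam`. -/
def PropD (Q : QHData S Λ) : Prop :=
  ∀ lam : Λ, wfd S Q (Q.costd lam) = wfd S Q (Q.L lam)

/-- Property E: `mu < lam` implies `inj (∇ mu) ≥ inj (∇ lam)`. -/
def PropE (Q : QHData S Λ) : Prop :=
  ∀ mu lam : Λ, mu < lam → injdim S (Q.costd lam) ≤ injdim S (Q.costd mu)

/-- The partial order is minimal for the quasi-hereditary structure: whenever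
`mu < lam` are adjacent, `L mu` is a composition factor of `Δ lam` or of `∇ lam`. -/
def MinimalOrder (Q : QHData S Λ) : Prop :=
  ∀ mu lam : Λ, mu < lam → (¬ ∃ nu, mu < nu ∧ nu < lam) →
    IsCompFactor S (Q.L mu) (Q.std lam) ∨ IsCompFactor S (Q.L mu) (Q.costd lam)

/-- `S` is connected (indecomposable as an algebra, i.e. one block): the only
central idempotents are `0` and `1`. -/
def ConnectedRing : Prop :=
  ∀ c : S, c * c = c → (∀ s : S, c * s = s * c) → c = 0 ∨ c = 1

/-- A tilting module: a module in `F(Δ) ∩ F(∇)`. -/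
def IsTilting (Q : QHData S Λ) (T : ModuleCat.{0} S) : Prop :=
  InStdFilt S Q T ∧ InCostdFilt S Q T

/-- The indecomposable tilting module `T(lam)`: an indecomposable tilting module in
which `L lam` occurs exactly once and all other composition factors `L mu` have
`mu < lam`. -/
def IsIndecTilting (Q : QHData S Λ) (lam : Λ) (T : ModuleCat.{0} S) : Prop :=
  IsTilting S Q T ∧ Nontrivial ↥T ∧
    (∀ A B : Submodule S ↥T, IsCompl A B → A = ⊥ ∨ B = ⊥) ∧
    CompFactorMult S (Q.L lam) T 1 ∧
    ∀ mu, IsCompFactor S (Q.L mu) T → mu = lam ∨ mu < lam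

/-- A full tilting module: a (finite-dimensional) tilting module having every
indecomposable tilting module as a direct summand. -/
def IsFullTilting (Q : QHData S Λ) (T : ModuleCat.{0} S) : Prop :=
  IsTilting S Q T ∧ Module.Finite S ↥T ∧
    ∀ (lam : Λ) (Tl : ModuleCat.{0} S), IsIndecTilting S Q lam Tl →
      ∃ Cc : ModuleCat.{0} S, Nonempty (↥T ≃ₗ[S] (↥Tl × ↥Cc))

/-- The Ringel dual ring `S' = End_S(T)^op`. -/
abbrev RingelDualRing (T : ModuleCat.{0} S) : Type := (Module.End S ↥T)ᵐᵒᵖ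

/-- `Hom_S(T, X)` is a module over `S' = End_S(T)^op` via `f • φ = φ ∘ f`. -/
instance homTModule (T X : ModuleCat.{0} S) :
    Module (RingelDualRing S T) (↥T →ₗ[S] ↥X) where
  smul a φ := φ ∘ₗ a.unop
  one_smul φ := rfl
  mul_smul a b φ := rfl
  smul_zero a := rfl
  smul_add a φ ψ := rfl
  add_smul a b φ := by
    ext x
    show φ ((a.unop + b.unop) x) = φ (a.unop x) + φ (b.unop x)
    rw [LinearMap.add_apply, map_add]
  zero_smul φ := by
    ext x
    show φ ((0 : Module.End S ↥T) x) = 0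
    rw [LinearMap.zero_apply, map_zero]

/-- The `S'`-module `Hom_S(T, X)`, i.e. the image of `X` under the functor
`F = Hom_S(T, -)`. -/
noncomputable def homTMod (T X : ModuleCat.{0} S) :
    ModuleCat.{0} (RingelDualRing S T) :=
  ModuleCat.of (RingelDualRing S T) (↥T →ₗ[S] ↥X)

/-- `Q'` is a Ringel dual quasi-hereditary structure for `(Q, T)`:
`T` is a full tilting module, `Q'` is a quasi-hereditary structure on
`S' = End_S(T)^op` for the opposite poset, and its standard modules are
`Δ'(lam) = Hom_S(T, ∇(lam))`. -/
def IsRingelDualData (Q : QHData S Λ) (T : ModuleCat.{0} S)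
    (Q' : QHData (RingelDualRing S T) Λᵒᵈ) : Prop :=
  IsFullTilting S Q T ∧
    ∀ lam : Λ, Nonempty
      (↥(Q'.std (OrderDual.toDual lam)) ≃ₗ[RingelDualRing S T]
        (↥T →ₗ[S] ↥(Q.costd lam)))

/-- `0 → T_d → ⋯ → T_0 → M → 0` exact with all `T_i` tilting modules. -/
def TiltResLE (Q : QHData S Λ) (M : ModuleCat.{0} S) (d : ℕ) : Prop :=
  ∃ (N : Fin (d + 2) → ModuleCat.{0} S)
    (f : ∀ i : Fin (d + 1), ↥(N i.castSucc) →ₗ[S] ↥(N i.succ)),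
    IsExactSeq S d N f ∧ N (Fin.last (d + 1)) = M ∧
    ∀ i : Fin (d + 1), IsTilting S Q (N i.castSucc)

/-- An idempotent `e` is primitive if it is nonzero and is not the sum of two
nonzero orthogonal idempotents. -/
def IsPrimitiveIdempotent (e : S) : Prop :=
  e * e = e ∧ e ≠ 0 ∧ ∀ a b : S, a * a = a → b * b = b → a * b = 0 → b * a = 0 →
    e = a + b → a = 0 ∨ b = 0

/-- The additive subgroup `e•M = {m | e • m = m}` of `M` (for `e` idempotent). -/
def cornerSet (eG : S) (M : ModuleCat.{0} S) : AddSubgroup ↥M where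
  carrier := {m | eG • m = m}
  add_mem' := by
    intro a b ha hb
    simp only [Set.mem_setOf_eq] at *
    rw [smul_add, ha, hb]
  zero_mem' := by
    simp only [Set.mem_setOf_eq]
    rw [smul_zero]
  neg_mem' := by
    intro a ha
    simp only [Set.mem_setOf_eq] at *
    rw [smul_neg, ha]

/-- The `R`-module structure on `e•M`, where `ι : R → S` identifies `R` with the
corner ring `eSe` (as a non-unital ring, with `ι 1 = e`). -/
def cornerModuleStructure (R : Type) [Ring R] (ι : R →ₙ+* S) (eG : S)
    (hone : ι 1 = eG) (hrange : ∀ r : R, eG * ι r * eG = ι r)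
    (M : ModuleCat.{0} S) : Module R ↥(cornerSet S eG M) where
  smul r m := ⟨ι r • (m : ↥M), by
    have hm : eG • (m : ↥M) = (m : ↥M) := m.2
    show eG • (ι r • (m : ↥M)) = ι r • (m : ↥M)
    have h : eG • (ι r • (m : ↥M)) = (eG * ι r * eG) • (m : ↥M) := by
      rw [mul_assoc, mul_smul, mul_smul, hm]
    rw [h, hrange]⟩
  one_smul m := by
    apply Subtype.ext
    show ι 1 • (m : ↥M) = (m : ↥M)
    rw [hone]
    exact m.2
  mul_smul r s m := by
    apply Subtype.ext
    show ι (r * s) • (m : ↥M) = ι r • (ι s • (m : ↥M))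
    rw [map_mul, mul_smul]
  smul_zero r := by
    apply Subtype.ext
    show ι r • (0 : ↥M) = 0
    rw [smul_zero]
  smul_add r m n := by
    apply Subtype.ext
    show ι r • ((m : ↥M) + (n : ↥M)) = ι r • (m : ↥M) + ι r • (n : ↥M)
    rw [smul_add]
  add_smul r s m := by
    apply Subtype.ext
    show ι (r + s) • (m : ↥M) = ι r • (m : ↥M) + ι s • (m : ↥M)
    rw [map_add, add_smul]
  zero_smul m := by
    apply Subtype.ext
    show ι 0 • (m : ↥M) = 0
    rw [map_zero, zero_smul]

/-- The `R`-module `e•M`, where `R ≅ eSe` via `ι`. -/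
noncomputable def cornerMod (R : Type) [Ring R] (ι : R →ₙ+* S) (eG : S)
    (hone : ι 1 = eG) (hrange : ∀ r : R, eG * ι r * eG = ι r)
    (M : ModuleCat.{0} S) : ModuleCat.{0} R :=
  @ModuleCat.of R _ ↥(cornerSet S eG M) _
    (cornerModuleStructure S R ι eG hone hrange M)

end QHPaper

/-!
Strong property A and `gfd(S) = 1` force every weight to be minimal or maximal. Then a module `Q`
has a map `f : Q → G` to a finite direct sum `G` of injective hulls `I(λ)`, `λ` not minimal, such
that all composition factors of `ker f` and of `C = coker f` have minimal weight. Here `G`, as well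
as every module with only minimal composition factors, lies in `F(∇)`; so `C ≠ 0` as soon as
`Q ∉ F(∇)`. A simple submodule of `C` is also a quotient of `C°`, so `Hom(C°, C) ≠ 0`, whereas
`Hom(G°, C) ≅ Hom(C°, G)` vanishes. Put `Q̄ = range f`. Since `G` is injective and all projective
dimensions are at most two, there are maps `Hom(C°, C) ↪ Ext¹(Q̄°, C) ↪ Ext²(Q̄°, Q̄)` and
`Ext²(Q°, Q) ↠ Ext²(Q̄°, Q) ↠ Ext²(Q̄°, Q̄)`.
-/

namespace QHPaper

/-! ### Maps between modules and subquotients -/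

section Modules

variable {R : Type*} [Ring R] {A B G I L M N P : Type*}
  [AddCommGroup A] [Module R A] [AddCommGroup B] [Module R B] [AddCommGroup G] [Module R G]
  [AddCommGroup I] [Module R I] [AddCommGroup L] [Module R L] [AddCommGroup M] [Module R M]
  [AddCommGroup N] [Module R N] [AddCommGroup P] [Module R P]

/-- The quotient of `M` by `A`, seen as the subquotient `B ⧸ A` with `B = ⊤`. -/
noncomputable def subquotEquivOfEqTop (A : Submodule R M) {B : Submodule R M} (hB : B = ⊤) :
    (B ⧸ A.comap B.subtype) ≃ₗ[R] M ⧸ A :=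
  Submodule.Quotient.equiv _ _ (LinearEquiv.ofTop B hB) <| by
    ext x
    simp [hB]

lemma range_le_of_forall_hom_subquot_eq_zero {A B : Submodule R M}
    (hAB : ∀ t : P →ₗ[R] B ⧸ A.comap B.subtype, t = 0) {h : P →ₗ[R] M}
    (hB : LinearMap.range h ≤ B) : LinearMap.range h ≤ A := by
  rintro _ ⟨x, rfl⟩
  have hx := LinearMap.congr_fun
    (hAB (Submodule.mkQ _ ∘ₗ h.codRestrict B fun y => hB ⟨y, rfl⟩)) x
  rwa [LinearMap.zero_apply, LinearMap.comp_apply, Submodule.mkQ_apply,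
    Submodule.Quotient.mk_eq_zero] at hx

lemma range_le_of_forall_hom_section_eq_zero {n : ℕ} {f : Fin (n + 1) → Submodule R M}
    {a b : Fin (n + 1)} (hab : a ≤ b)
    (hf : ∀ i : Fin n, a ≤ i.castSucc → i.succ ≤ b →
      ∀ t : P →ₗ[R] f i.succ ⧸ (f i.castSucc).comap (f i.succ).subtype, t = 0)
    {h : P →ₗ[R] M} (hb : LinearMap.range h ≤ f b) : LinearMap.range h ≤ f a := by
  induction b using Fin.induction with
  | zero => rwa [Fin.le_zero_iff.1 hab]
  | succ i ih =>
    rcases hab.eq_or_lt with rfl | hlt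
    · exact hb
    · have hi : a ≤ i.castSucc := Fin.le_castSucc_iff.2 hlt
      exact ih hi (fun j haj hji => hf j haj (hji.trans Fin.castSucc_lt_succ.le))
        (range_le_of_forall_hom_subquot_eq_zero (hf i hi le_rfl) hb)

lemma nonempty_subquot_comap_equiv {g : M →ₗ[R] N} (A : Submodule R N) {B : Submodule R N}
    (hB : B ≤ LinearMap.range g) :
    Nonempty ((B.comap g ⧸ (A.comap g).comap (B.comap g).subtype) ≃ₗ[R]
      B ⧸ A.comap B.subtype) := by
  let r : B.comap g →ₗ[R] B := g.restrict fun _ hx => hx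
  have hr : Function.Surjective r := fun y =>
    let ⟨x, hx⟩ := hB y.2
    ⟨⟨x, by simp [hx]⟩, Subtype.ext hx⟩
  have hker : LinearMap.ker ((A.comap B.subtype).mkQ ∘ₗ r) =
      (A.comap g).comap (B.comap g).subtype := by
    rw [LinearMap.ker_comp, Submodule.ker_mkQ]
    rfl
  exact ⟨(Submodule.quotEquivOfEq _ _ hker.symm).trans
    (LinearMap.quotKerEquivOfSurjective _ ((Submodule.mkQ_surjective _).comp hr))⟩

lemma nonempty_subquot_map_equiv {g : M →ₗ[R] N} (hg : Function.Injective g)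
    (A B : Submodule R M) :
    Nonempty ((B ⧸ A.comap B.subtype) ≃ₗ[R]
      B.map g ⧸ (A.map g).comap (B.map g).subtype) := by
  have h := nonempty_subquot_comap_equiv (A.map g) (g := g) (LinearMap.map_le_range (p := B))
  rwa [Submodule.comap_map_eq_of_injective hg, Submodule.comap_map_eq_of_injective hg] at h

/-- A horseshoe lemma for the functor `Hom(P, -)`. -/
lemma bijective_comp_prod [Module.Projective R P] {f : M →ₗ[R] G} {q : M →ₗ[R] L}
    {g : L →ₗ[R] I} (hq : Function.Surjective q)
    (hf : Function.Bijective fun h : P →ₗ[R] LinearMap.ker q =>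
      f ∘ₗ (LinearMap.ker q).subtype ∘ₗ h)
    (hg : Function.Bijective fun h : P →ₗ[R] L => g ∘ₗ h) :
    Function.Bijective fun h : P →ₗ[R] M => f.prod (g ∘ₗ q) ∘ₗ h := by
  constructor
  · intro h₁ h₂ h
    have hqh : q ∘ₗ h₁ = q ∘ₗ h₂ := hg.1 (congrArg (LinearMap.snd R G I ∘ₗ ·) h)
    have hfh : f ∘ₗ h₁ = f ∘ₗ h₂ := congrArg (LinearMap.fst R G I ∘ₗ ·) h
    let k : P →ₗ[R] LinearMap.ker q := (h₁ - h₂).codRestrict _ fun x => by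
      simpa [sub_eq_zero] using LinearMap.congr_fun hqh x
    have hk : k = 0 := hf.1 <| LinearMap.ext fun x => by
      simpa [k, sub_eq_zero] using LinearMap.congr_fun hfh x
    exact LinearMap.ext fun x =>
      sub_eq_zero.1 (congrArg Subtype.val (LinearMap.congr_fun hk x))
  · intro t
    obtain ⟨l, hl⟩ := hg.2 (LinearMap.snd R G I ∘ₗ t)
    obtain ⟨u, rfl⟩ := Module.projective_lifting_property q l hq
    obtain ⟨k, hk⟩ := hf.2 (LinearMap.fst R G I ∘ₗ t - f ∘ₗ u)
    refine ⟨(LinearMap.ker q).subtype ∘ₗ k + u, LinearMap.ext fun x => Prod.ext ?_ ?_⟩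
    · simpa [eq_sub_iff_add_eq] using LinearMap.congr_fun hk x
    · simpa using LinearMap.congr_fun hl x

end Modules

/-! ### Classes of modules closed under extensions -/

variable {S : Type} [Ring S]

/-- A class of modules that contains the zero modules and is closed under extensions (hence
under isomorphism, an isomorphism being a surjection with zero kernel). -/
structure IsExtensionClosed (p : ModuleCat.{0} S → Prop) : Prop where
  of_subsingleton : ∀ M : ModuleCat.{0} S, Subsingleton M → p M
  of_surjective : ∀ {M N : ModuleCat.{0} S} (g : M →ₗ[S] N), Function.Surjective g →
    p (ModuleCat.of S (LinearMap.ker g)) → p N → p M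

lemma filtration_induction {p : ModuleCat.{0} S → Prop} {M : ModuleCat.{0} S} {n : ℕ}
    {f : Fin (n + 1) → Submodule S M} {D : Fin n → ModuleCat.{0} S} (hf : Monotone f)
    (hD : ∀ i, Nonempty (subquot S (f i.castSucc) (f i.succ) ≃ₗ[S] D i))
    (hequiv : ∀ {X Y : ModuleCat.{0} S}, (X ≃ₗ[S] Y) → p X → p Y)
    (hsurj : ∀ i {X : ModuleCat.{0} S} (g : X →ₗ[S] D i), Function.Surjective g →
      p (ModuleCat.of S (LinearMap.ker g)) → p X)
    (h0 : p (ModuleCat.of S (f 0))) : p (ModuleCat.of S (f (Fin.last n))) := by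
  suffices h : ∀ i, p (ModuleCat.of S (f i)) from h _
  intro i
  induction i using Fin.induction with
  | zero => exact h0
  | succ i ih =>
    obtain ⟨e⟩ := hD i
    let g : f i.succ →ₗ[S] D i := e.toLinearMap ∘ₗ Submodule.mkQ _
    have hker : LinearMap.ker g = (f i.castSucc).comap (f i.succ).subtype := by
      rw [LinearEquiv.ker_comp, Submodule.ker_mkQ]
    refine hsurj i (X := ModuleCat.of S (f i.succ)) g
      (e.surjective.comp (Submodule.mkQ_surjective _)) (hequiv ?_ ih)
    exact ((LinearEquiv.ofEq _ _ hker).trans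
      (Submodule.comapSubtypeEquivOfLe (hf Fin.castSucc_lt_succ.le))).symm

namespace IsExtensionClosed

variable {p : ModuleCat.{0} S → Prop} (hp : IsExtensionClosed p)
include hp

lemma of_equiv {M N : ModuleCat.{0} S} (e : M ≃ₗ[S] N) (hM : p M) : p N :=
  hp.of_surjective e.symm.toLinearMap e.symm.surjective
    (hp.of_subsingleton _ (Submodule.subsingleton_iff_eq_bot.2 e.symm.ker)) hM

lemma of_filtration {M : ModuleCat.{0} S} {n : ℕ} {f : Fin (n + 1) → Submodule S M}
    {D : Fin n → ModuleCat.{0} S} (hM : HasFiltrationWithSections S M n f D)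
    (hD : ∀ i, p (D i)) : p M := by
  obtain ⟨hf, hbot, htop, hsec⟩ := hM
  refine hp.of_equiv (M := ModuleCat.of S (f (Fin.last n))) (LinearEquiv.ofTop _ htop) <|
    filtration_induction hf hsec hp.of_equiv
      (fun i _ g hg hker => hp.of_surjective g hg hker (hD i))
      (hp.of_subsingleton _ (Submodule.subsingleton_iff_eq_bot.2 hbot))

end IsExtensionClosed

lemma isExtensionClosed_isFiniteLength :
    IsExtensionClosed fun M : ModuleCat.{0} S => IsFiniteLength S M where
  of_subsingleton _ _ := .of_subsingleton
  of_surjective g _ hker hN := by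
    rw [isFiniteLength_iff_isNoetherian_isArtinian] at hker hN ⊢
    obtain ⟨_, _⟩ := hker
    obtain ⟨_, _⟩ := hN
    have hexact : LinearMap.range (LinearMap.ker g).subtype = LinearMap.ker g :=
      Submodule.range_subtype _
    exact ⟨isNoetherian_of_range_eq_ker (LinearMap.ker g).subtype g hexact,
      isArtinian_of_range_eq_ker (LinearMap.ker g).subtype g hexact⟩

/-! ### Projective covers, injective hulls and composition factors -/

variable {Λ : Type} [Fintype Λ] [PartialOrder Λ] (H : QHData S Λ)
  {M N : Type} [AddCommGroup M] [Module S M] [AddCommGroup N] [Module S N]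

namespace QHData

instance isSimpleModule_L (lam : Λ) : IsSimpleModule S (H.L lam) := H.simpleL lam

instance projective_P (lam : Λ) : Module.Projective S (H.P lam) := (H.projCover lam).1

instance injective_I (lam : Λ) : Module.Injective S (H.I lam) := (H.injHull lam).1

/-- The projective cover `P(λ) → L(λ)`. -/
noncomputable def headMap (lam : Λ) : H.P lam →ₗ[S] H.L lam := (H.projCover lam).2.choose

/-- The injective hull `L(λ) → I(λ)`. -/
noncomputable def socleMap (lam : Λ) : H.L lam →ₗ[S] H.I lam := (H.injHull lam).2.choose

variable {lam mu nu : Λ}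

lemma headMap_surjective (lam : Λ) : Function.Surjective (H.headMap lam) :=
  (H.projCover lam).2.choose_spec.1

lemma headMap_ne_zero (lam : Λ) : H.headMap lam ≠ 0 :=
  have := IsSimpleModule.nontrivial S (H.L lam)
  LinearMap.ne_zero_of_surjective (H.headMap_surjective lam)

lemma socleMap_injective (lam : Λ) : Function.Injective (H.socleMap lam) :=
  (H.injHull lam).2.choose_spec.1

lemma socleMap_comp_eq_zero {h : M →ₗ[S] H.L lam} (hh : H.socleMap lam ∘ₗ h = 0) : h = 0 :=
  LinearMap.cancel_left (H.socleMap_injective lam) |>.1 <| hh.trans (LinearMap.comp_zero _).symm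

lemma inf_range_socleMap_ne_bot {N : Submodule S (H.I lam)} (hN : N ≠ ⊥) :
    N ⊓ LinearMap.range (H.socleMap lam) ≠ ⊥ :=
  fun h => hN ((H.injHull lam).2.choose_spec.2 N h)

lemma isCoatom_ker_headMap (lam : Λ) : IsCoatom (LinearMap.ker (H.headMap lam)) :=
  (H.headMap lam).isCoatom_ker_of_surjective (H.headMap_surjective lam)

lemma le_ker_headMap {N : Submodule S (H.P lam)} (hN : N ≠ ⊤) :
    N ≤ LinearMap.ker (H.headMap lam) := by
  by_contra h
  exact hN ((H.projCover lam).2.choose_spec.2 N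
    ((H.isCoatom_ker_headMap lam).2 _ (right_lt_sup.2 h)))

lemma surjective_of_headMap_comp_ne_zero {h : M →ₗ[S] H.P lam} (hh : H.headMap lam ∘ₗ h ≠ 0) :
    Function.Surjective h := by
  by_contra hs
  exact hh <| LinearMap.ext fun x =>
    H.le_ker_headMap (mt LinearMap.range_eq_top.1 hs) (LinearMap.mem_range_self h x)

lemma ker_le_ker_headMap {h : H.P lam →ₗ[S] M} (hh : h ≠ 0) :
    LinearMap.ker h ≤ LinearMap.ker (H.headMap lam) :=
  H.le_ker_headMap (mt LinearMap.ker_eq_top.1 hh)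

lemma exists_comp_eq_headMap {g : M →ₗ[S] H.L lam} (hg : Function.Surjective g) :
    ∃ t : H.P lam →ₗ[S] M, g ∘ₗ t = H.headMap lam :=
  Module.projective_lifting_property g _ hg

lemma ne_zero_of_comp_eq_headMap {g : M →ₗ[S] H.L lam} {t : H.P lam →ₗ[S] M}
    (h : g ∘ₗ t = H.headMap lam) : t ≠ 0 := by
  rintro rfl
  exact H.headMap_ne_zero lam (h.symm.trans (LinearMap.comp_zero g))

lemma ker_eq_ker_headMap [IsSimpleModule S M] {h : H.P lam →ₗ[S] M} (hh : h ≠ 0) :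
    LinearMap.ker h = LinearMap.ker (H.headMap lam) :=
  have hcoatom := LinearMap.isCoatom_ker_of_surjective (LinearMap.surjective_of_ne_zero hh)
  (hcoatom.le_iff_eq (H.isCoatom_ker_headMap lam).1).1 (H.ker_le_ker_headMap hh) |>.symm

lemma nonempty_equiv_L_of_hom_ne_zero [IsSimpleModule S M] {h : H.P lam →ₗ[S] M} (hh : h ≠ 0) :
    Nonempty (M ≃ₗ[S] H.L lam) :=
  ⟨(h.quotKerEquivOfSurjective (LinearMap.surjective_of_ne_zero hh)).symm.trans <|
    (Submodule.quotEquivOfEq _ _ (H.ker_eq_ker_headMap hh)).trans <|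
      (H.headMap lam).quotKerEquivOfSurjective (H.headMap_surjective lam)⟩

lemma eq_of_hom_L_ne_zero {h : H.P lam →ₗ[S] H.L mu} (hh : h ≠ 0) : mu = lam := by
  by_contra hne
  obtain ⟨e⟩ := H.nonempty_equiv_L_of_hom_ne_zero hh
  exact (H.nonisoL mu lam hne).false e

lemma exists_equiv_L (M : Type) [AddCommGroup M] [Module S M] [hM : IsSimpleModule S M] :
    ∃ lam, Nonempty (M ≃ₗ[S] H.L lam) :=
  H.fullL (ModuleCat.of S M) hM

lemma exists_hom_P_ne_zero (M : Type) [AddCommGroup M] [Module S M] [Nontrivial M] :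
    ∃ (lam : Λ) (h : H.P lam →ₗ[S] M), h ≠ 0 := by
  obtain ⟨m, hm⟩ := exists_ne (0 : M)
  let B := Submodule.span S {m}
  have : Nontrivial B :=
    ⟨⟨m, Submodule.mem_span_singleton_self m⟩, 0, fun h => hm (congrArg Subtype.val h)⟩
  obtain ⟨C, hC⟩ := IsCoatomic.exists_coatom (Submodule S B)
  have : IsSimpleModule S (B ⧸ C) := isSimpleModule_iff_isCoatom.2 hC
  obtain ⟨lam, ⟨e⟩⟩ := H.exists_equiv_L (B ⧸ C)
  obtain ⟨t, ht⟩ := H.exists_comp_eq_headMap (g := e.toLinearMap ∘ₗ C.mkQ)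
    (e.surjective.comp C.mkQ_surjective)
  refine ⟨lam, B.subtype ∘ₗ t, fun h => H.ne_zero_of_comp_eq_headMap ht ?_⟩
  exact LinearMap.ext fun x => Subtype.ext (LinearMap.congr_fun h x)

lemma exists_surjective_range_L {h : H.P lam →ₗ[S] M} (hh : h ≠ 0) :
    ∃ q : LinearMap.range h →ₗ[S] H.L lam, Function.Surjective q := by
  let q := (LinearMap.ker h).liftQ (H.headMap lam) (H.ker_le_ker_headMap hh)
  have hq : Function.Surjective q := by
    rw [← LinearMap.range_eq_top, Submodule.range_liftQ, LinearMap.range_eq_top]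
    exact H.headMap_surjective lam
  exact ⟨q ∘ₗ h.quotKerEquivRange.symm.toLinearMap, hq.comp h.quotKerEquivRange.symm.surjective⟩

lemma isCompFactor_of_hom_ne_zero {M : ModuleCat.{0} S} {h : H.P lam →ₗ[S] M} (hh : h ≠ 0) :
    IsCompFactor S (H.L lam) M := by
  obtain ⟨q, hq⟩ := H.exists_surjective_range_L hh
  refine ⟨(LinearMap.ker q).map (LinearMap.range h).subtype, LinearMap.range h,
    Submodule.map_subtype_le _ _, ⟨?_⟩⟩
  exact (Submodule.quotEquivOfEq _ _ (Submodule.comap_map_eq_of_injective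
    (LinearMap.range h).injective_subtype _)).trans (q.quotKerEquivOfSurjective hq)

/-- All composition factors of `M` have weight in `s`. Since `P(ν)` is projective, `L(ν)` is a
composition factor of `M` if and only if `Hom(P(ν), M) ≠ 0`, see `QHData.supportedOn_iff`. -/
def SupportedOn (s : Set Λ) (M : Type) [AddCommGroup M] [Module S M] : Prop :=
  ∀ nu ∉ s, ∀ h : H.P nu →ₗ[S] M, h = 0

variable {H} {s t : Set Λ}

namespace SupportedOn

lemma mono (hs : H.SupportedOn s M) (hst : s ⊆ t) : H.SupportedOn t M :=
  fun nu hnu => hs nu (mt (@hst nu) hnu)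

lemma of_injective (hs : H.SupportedOn s N) {f : M →ₗ[S] N} (hf : Function.Injective f) :
    H.SupportedOn s M :=
  fun nu hnu h => (LinearMap.cancel_left hf).1 <|
    (hs nu hnu (f ∘ₗ h)).trans (LinearMap.comp_zero f).symm

lemma of_surjective (hs : H.SupportedOn s M) {f : M →ₗ[S] N} (hf : Function.Surjective f) :
    H.SupportedOn s N := by
  intro nu hnu h
  obtain ⟨t, rfl⟩ := Module.projective_lifting_property f h hf
  rw [hs nu hnu t, LinearMap.comp_zero]

lemma mem_of_surjective (hs : H.SupportedOn s M) {f : M →ₗ[S] H.L lam}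
    (hf : Function.Surjective f) : lam ∈ s := by
  by_contra hlam
  obtain ⟨t, ht⟩ := H.exists_comp_eq_headMap hf
  exact H.ne_zero_of_comp_eq_headMap ht (hs lam hlam t)

lemma subsingleton (hs : H.SupportedOn ∅ M) : Subsingleton M := by
  by_contra hM
  have := not_subsingleton_iff_nontrivial.1 hM
  obtain ⟨nu, h, hh⟩ := H.exists_hom_P_ne_zero M
  exact hh (hs nu (Set.notMem_empty nu) h)

end SupportedOn

lemma supportedOn_L (hlam : lam ∈ s) : H.SupportedOn s (H.L lam) := by
  intro nu hnu h
  by_contra hh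
  exact hnu (H.eq_of_hom_L_ne_zero hh ▸ hlam)

lemma supportedOn_iff {M : ModuleCat.{0} S} :
    H.SupportedOn s M ↔ ∀ lam, IsCompFactor S (H.L lam) M → lam ∈ s := by
  refine ⟨fun hs lam ⟨A, B, _, ⟨e⟩⟩ => ?_, fun hM nu hnu h => ?_⟩
  · exact (hs.of_injective B.injective_subtype).mem_of_surjective
      (f := e.toLinearMap ∘ₗ Submodule.mkQ _) (e.surjective.comp (Submodule.mkQ_surjective _))
  · by_contra hh
    exact hnu (hM nu (H.isCompFactor_of_hom_ne_zero hh))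

lemma isExtensionClosed_supportedOn (H : QHData S Λ) (s : Set Λ) :
    IsExtensionClosed fun M : ModuleCat.{0} S => H.SupportedOn s M where
  of_subsingleton _ _ _ _ _ := LinearMap.ext fun _ => Subsingleton.elim _ _
  of_surjective g _ hker hN nu hnu h := by
    have hgh := LinearMap.congr_fun (hN nu hnu (g ∘ₗ h))
    have h0 := hker nu hnu (h.codRestrict (LinearMap.ker g) hgh)
    exact LinearMap.ext fun x => congrArg Subtype.val (LinearMap.congr_fun h0 x)

lemma eq_top_of_forall_range_le {N : Submodule S M}
    (hN : ∀ nu, ∀ h : H.P nu →ₗ[S] M, LinearMap.range h ≤ N) : N = ⊤ := by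
  have hs : H.SupportedOn ∅ (M ⧸ N) := by
    intro nu _ h
    obtain ⟨t, rfl⟩ := Module.projective_lifting_property N.mkQ h N.mkQ_surjective
    rw [← LinearMap.range_le_ker_iff, Submodule.ker_mkQ]
    exact hN nu t
  exact Submodule.Quotient.subsingleton_iff.1 hs.subsingleton

end QHData

variable {H} in
lemma IsExtensionClosed.of_supportedOn {s : Set Λ} {p : ModuleCat.{0} S → Prop}
    (hp : IsExtensionClosed p) (hL : ∀ lam ∈ s, p (H.L lam)) (hM : IsFiniteLength S M)
    (hs : H.SupportedOn s M) : p (ModuleCat.of S M) := by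
  induction hM with
  | of_subsingleton => exact hp.of_subsingleton _ ‹_›
  | @of_simple_quotient M _ _ N _ _ ih =>
    obtain ⟨lam, ⟨e⟩⟩ := H.exists_equiv_L (M ⧸ N)
    have hg : Function.Surjective (e.toLinearMap ∘ₗ N.mkQ) := e.surjective.comp N.mkQ_surjective
    have hker : LinearMap.ker (e.toLinearMap ∘ₗ N.mkQ) = N := by
      rw [LinearEquiv.ker_comp, Submodule.ker_mkQ]
    refine hp.of_surjective (M := ModuleCat.of S M) (e.toLinearMap ∘ₗ N.mkQ) hg ?_
      (hL lam (hs.mem_of_surjective hg))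
    rw [hker]
    exact ih (hs.of_injective N.injective_subtype)

/-! ### Standard modules -/

namespace QHData

variable {lam mu nu : Λ} {s : Set Λ}

lemma exists_stdMap (lam : Λ) : ∃ p : H.P lam →ₗ[S] H.std lam, Function.Surjective p ∧
    ∀ K : Submodule S (H.P lam), H.SupportedOn (Set.Iic lam) (H.P lam ⧸ K) →
      LinearMap.ker p ≤ K := by
  obtain ⟨K, ⟨e⟩, -, hmin⟩ := H.stdSpec lam
  refine ⟨e.symm.toLinearMap ∘ₗ K.mkQ, e.symm.surjective.comp K.mkQ_surjective, fun K' hK' => ?_⟩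
  rw [LinearEquiv.ker_comp, Submodule.ker_mkQ]
  exact hmin K' (supportedOn_iff (M := ModuleCat.of S (H.P lam ⧸ K')).1 hK')

lemma supportedOn_std (lam : Λ) : H.SupportedOn (Set.Iic lam) (H.std lam) := by
  obtain ⟨K, ⟨e⟩, hK, -⟩ := H.stdSpec lam
  exact (supportedOn_iff (M := ModuleCat.of S (H.P lam ⧸ K)).2 hK).of_injective e.injective

lemma isFiniteLength_std (lam : Λ) : IsFiniteLength S (H.std lam) := by
  obtain ⟨n, f, hf, hbot, htop, hsimple, -⟩ := H.multOne lam
  refine isExtensionClosed_isFiniteLength.of_filtration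
    (D := fun i => ModuleCat.of S (subquot S (f i.castSucc) (f i.succ)))
    ⟨hf, hbot, htop, fun i => ⟨.refl S _⟩⟩ fun i => ?_
  have := hsimple i
  exact isFiniteLength_iff_isNoetherian_isArtinian.2 ⟨inferInstance, inferInstance⟩

lemma isFiniteLength_P (lam : Λ) : IsFiniteLength S (H.P lam) := by
  obtain ⟨n, f, g, hf, -⟩ := H.projFilt lam
  exact isExtensionClosed_isFiniteLength.of_filtration hf fun i => H.isFiniteLength_std (g i)

include H in
/-- A finitely generated module is a finite sum of images of the modules `P(ν)`. -/
lemma isFiniteLength_of_finite (M : Type) [AddCommGroup M] [Module S M] [Module.Finite S M] :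
    IsFiniteLength S M := by
  let F (i : Σ nu, H.P nu →ₗ[S] M) : Submodule S M := LinearMap.range i.2
  have hF : ⨆ i, F i = ⊤ :=
    eq_top_of_forall_range_le (H := H) fun nu h => le_iSup F ⟨nu, h⟩
  obtain ⟨t, ht⟩ := CompleteLattice.IsCompactElement.exists_finset_of_le_iSup _
    ((Submodule.fg_iff_compact ⊤).1 Module.Finite.fg_top) F hF.ge
  have hFt : ⨆ i : t, F i = ⊤ := by rw [← top_le_iff, iSup_subtype]; exact ht
  have hfin (i : t) : IsNoetherian S (F i) ∧ IsArtinian S (F i) :=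
    isFiniteLength_iff_isNoetherian_isArtinian.1 <|
      (H.isFiniteLength_P i.1.1).of_surjective i.1.2.surjective_rangeRestrict
  have (i : t) : IsNoetherian S (F i) := (hfin i).1
  have (i : t) : IsArtinian S (F i) := (hfin i).2
  refine Submodule.topEquiv.isFiniteLength ?_
  rw [isFiniteLength_iff_isNoetherian_isArtinian, ← hFt]
  exact ⟨isNoetherian_iSup, isArtinian_iSup⟩

include H in
lemma isArtinianRing : IsArtinianRing S :=
  (isFiniteLength_iff_isNoetherian_isArtinian.1 (H.isFiniteLength_of_finite S)).2

lemma exists_stdRadical (lam : Λ) : ∃ R : Submodule S (H.std lam),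
    Nonempty ((H.std lam ⧸ R) ≃ₗ[S] H.L lam) ∧ H.SupportedOn (Set.Iio lam) R := by
  obtain ⟨n, f, -, hbot, htop, hsimple, hone⟩ := H.multOne lam
  obtain ⟨hunique, ⟨⟨i₀, ⟨e⟩⟩⟩⟩ := Nat.card_eq_one_iff_unique.1 hone
  have hsec : ∀ i ≠ i₀, ∀ t : H.P lam →ₗ[S] subquot S (f i.castSucc) (f i.succ), t = 0 := by
    intro i hi t
    have := hsimple i
    by_contra ht
    have heq := hunique.elim ⟨i, H.nonempty_equiv_L_of_hom_ne_zero ht⟩ ⟨i₀, ⟨e⟩⟩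
    exact hi (congrArg Subtype.val heq)
  have hi₀ : i₀.castSucc < i₀.succ := Fin.castSucc_lt_succ
  obtain ⟨p, hp, -⟩ := H.exists_stdMap lam
  have htop₀ : f i₀.succ = ⊤ := by
    rw [eq_top_iff, ← LinearMap.range_eq_top.2 hp]
    exact range_le_of_forall_hom_section_eq_zero (Fin.le_last _)
      (fun i hi _ => hsec i (by rintro rfl; exact hi.not_gt hi₀)) (htop ▸ le_top)
  refine ⟨f i₀.castSucc, ⟨(subquotEquivOfEqTop _ htop₀).symm.trans e⟩, fun nu hnu h => ?_⟩
  have hinj := (f i₀.castSucc).injective_subtype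
  rcases eq_or_ne nu lam with rfl | hne
  · refine (LinearMap.cancel_left hinj).1 ?_
    rw [LinearMap.comp_zero, ← LinearMap.range_eq_bot, ← le_bot_iff, ← hbot]
    refine range_le_of_forall_hom_section_eq_zero (Fin.zero_le i₀.castSucc)
      (fun i _ hi => hsec i (by rintro rfl; exact hi.not_gt hi₀)) ?_
    exact (LinearMap.range_comp_le_range h _).trans (Submodule.range_subtype _).le
  · exact (H.supportedOn_std lam).of_injective hinj nu (fun hle => hnu (hle.lt_of_ne hne)) h

variable {H}

lemma nonempty_std_equiv_L (hlam : IsMin lam) : Nonempty (H.std lam ≃ₗ[S] H.L lam) := by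
  obtain ⟨R, ⟨e⟩, hR⟩ := H.exists_stdRadical lam
  rw [hlam.Iio_eq] at hR
  have hbot : R = ⊥ := Submodule.subsingleton_iff_eq_bot.1 hR.subsingleton
  exact ⟨(Submodule.quotEquivOfEqBot R hbot).symm.trans e⟩

lemma nonempty_P_equiv_std (hlam : IsMax lam) : Nonempty (H.P lam ≃ₗ[S] H.std lam) := by
  obtain ⟨n, f, g, ⟨-, hbot, htop, hsec⟩, hg, hone⟩ := H.projFilt lam
  have hg' : ∀ i, g i = lam := fun i => (hlam.eq_of_le (hg i)).symm
  obtain rfl : n = 1 := by simpa [hg'] using hone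
  obtain ⟨e⟩ := hsec 0
  have hbot' : f (Fin.castSucc 0) = ⊥ := hbot
  have hequiv := (Submodule.quotEquivOfEqBot _ hbot').symm.trans
    ((subquotEquivOfEqTop _ htop).symm.trans e)
  exact ⟨hg' 0 ▸ hequiv⟩

lemma supportedOn_ker_headMap (hlam : IsMax lam) :
    H.SupportedOn (Set.Iio lam) (LinearMap.ker (H.headMap lam)) := by
  obtain ⟨eP⟩ := H.nonempty_P_equiv_std hlam
  obtain ⟨R, ⟨e⟩, hR⟩ := H.exists_stdRadical lam
  let g : H.P lam →ₗ[S] H.L lam := e.toLinearMap ∘ₗ R.mkQ ∘ₗ eP.toLinearMap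
  have hg : g ≠ 0 := by
    have := IsSimpleModule.nontrivial S (H.L lam)
    exact LinearMap.ne_zero_of_surjective
      (e.surjective.comp (R.mkQ_surjective.comp eP.surjective))
  have hmem : ∀ x ∈ LinearMap.ker (H.headMap lam), eP x ∈ R := by
    rw [← H.ker_eq_ker_headMap hg]
    intro x hx
    simpa [g, Submodule.Quotient.mk_eq_zero] using hx
  exact hR.of_injective (f := eP.toLinearMap.restrict hmem)
    fun x y hxy => Subtype.ext (eP.injective (congrArg Subtype.val hxy))

end QHData

/-! ### Costandard modules -/

variable {H} in
lemma IsExtensionClosed.exists_submodule_P {p : ModuleCat.{0} S → Prop} (hp : IsExtensionClosed p)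
    {mu : Λ} (hstd : ∀ nu > mu, p (H.std nu)) :
    ∃ K : Submodule S (H.P mu), p (ModuleCat.of S K) ∧ Nonempty ((H.P mu ⧸ K) ≃ₗ[S] H.std mu) := by
  obtain ⟨n, f, g, ⟨hf, hbot, htop, hsec⟩, hg, hone⟩ := H.projFilt mu
  obtain ⟨hunique, ⟨i, hi⟩⟩ := Nat.card_eq_one_iff_unique.1 hone
  obtain ⟨n, rfl⟩ : ∃ m, n = m + 1 := Nat.exists_eq_succ_of_ne_zero i.pos.ne'
  obtain ⟨e⟩ := hsec (Fin.last n)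
  let e' := (subquotEquivOfEqTop (f (Fin.last n).castSucc) htop).symm.trans e
  have hlast : g (Fin.last n) = mu := by
    obtain ⟨R, ⟨eL⟩, -⟩ := H.exists_stdRadical (g (Fin.last n))
    have := IsSimpleModule.nontrivial S (H.L (g (Fin.last n)))
    refine H.eq_of_hom_L_ne_zero (h := eL.toLinearMap ∘ₗ R.mkQ ∘ₗ e'.toLinearMap ∘ₗ Submodule.mkQ _)
      (LinearMap.ne_zero_of_surjective ?_)
    exact eL.surjective.comp <| R.mkQ_surjective.comp <| e'.surjective.comp
      (Submodule.mkQ_surjective _)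
  have hlt : ∀ j : Fin n, mu < g j.castSucc := fun j => (hg _).lt_of_ne fun h =>
    Fin.castSucc_ne_last j <|
      congrArg Subtype.val (hunique.elim ⟨j.castSucc, h.symm⟩ ⟨Fin.last n, hlast⟩)
  refine ⟨f (Fin.last n).castSucc, ?_, ⟨hlast ▸ e'⟩⟩
  refine filtration_induction (f := fun j : Fin (n + 1) => f j.castSucc)
    (fun a b hab => hf (Fin.castSucc_le_castSucc_iff.2 hab)) (fun j => hsec j.castSucc)
    hp.of_equiv (fun j _ g hg hker => hp.of_surjective g hg hker (hstd _ (hlt j))) ?_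
  exact hp.of_subsingleton _ (Submodule.subsingleton_iff_eq_bot.2 hbot)

namespace QHData

variable {lam mu nu : Λ} {s : Set Λ}

lemma exists_comp_eq_socleMap_comp_headMap {h : M →ₗ[S] H.I lam} (hh : h ≠ 0) :
    ∃ t : H.P lam →ₗ[S] M, h ∘ₗ t = H.socleMap lam ∘ₗ H.headMap lam := by
  have hcomap : (LinearMap.range h).comap (H.socleMap lam) = ⊤ := by
    refine (eq_bot_or_eq_top _).resolve_left fun hbot => ?_
    refine H.inf_range_socleMap_ne_bot (mt LinearMap.range_eq_bot.1 hh) ?_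
    rw [inf_comm, ← Submodule.map_comap_eq, hbot, Submodule.map_bot]
  have hmem : ∀ x, H.socleMap lam (H.headMap lam x) ∈ LinearMap.range h := fun x =>
    Submodule.mem_comap.1 (hcomap ▸ Submodule.mem_top)
  obtain ⟨t, ht⟩ := Module.projective_lifting_property h.rangeRestrict
    ((H.socleMap lam ∘ₗ H.headMap lam).codRestrict (LinearMap.range h) hmem)
    h.surjective_rangeRestrict
  exact ⟨t, LinearMap.ext fun x => congrArg Subtype.val (LinearMap.congr_fun ht x)⟩

lemma socleMap_comp_headMap_ne_zero (lam : Λ) : H.socleMap lam ∘ₗ H.headMap lam ≠ 0 :=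
  mt H.socleMap_comp_eq_zero (H.headMap_ne_zero lam)

variable {H}

lemma SupportedOn.hom_I_eq_zero (hs : H.SupportedOn s M) (hlam : lam ∉ s)
    (h : M →ₗ[S] H.I lam) : h = 0 := by
  by_contra hh
  obtain ⟨t, ht⟩ := H.exists_comp_eq_socleMap_comp_headMap hh
  rw [hs lam hlam t, LinearMap.comp_zero] at ht
  exact H.socleMap_comp_headMap_ne_zero lam ht.symm

/-- A map `P(ν) → I(λ)` that kills the radical of `P(ν)` factors through `L(ν)`, hence lands in
the socle of `I(λ)`. -/
lemma range_le_range_socleMap {h : H.P nu →ₗ[S] H.I lam}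
    (hh : LinearMap.ker (H.headMap nu) ≤ LinearMap.ker h) :
    LinearMap.range h ≤ LinearMap.range (H.socleMap lam) := by
  rcases eq_or_ne h 0 with rfl | hne
  · simp
  obtain ⟨t, ht⟩ := H.exists_comp_eq_socleMap_comp_headMap hne
  have hsurj : Function.Surjective t := H.surjective_of_headMap_comp_ne_zero fun h0 => by
    refine H.socleMap_comp_headMap_ne_zero lam (ht ▸ LinearMap.ext fun x => ?_)
    exact hh (LinearMap.congr_fun h0 x)
  rw [← LinearMap.range_comp_of_range_eq_top h (LinearMap.range_eq_top.2 hsurj), ht]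
  exact LinearMap.range_comp_le_range _ _

lemma supportedOn_I (hlam : IsMax lam) : H.SupportedOn (Set.Iic lam) (H.I lam) := by
  intro nu hnu h
  obtain ⟨n, f, g, hf, hg, -⟩ := H.projFilt nu
  have hP : H.SupportedOn {lam}ᶜ (H.P nu) :=
    (H.isExtensionClosed_supportedOn _).of_filtration hf fun i =>
      (H.supportedOn_std (g i)).mono fun _ hle => by
        rintro rfl
        exact hnu ((hg i).trans_eq (hlam.eq_of_le hle).symm)
  exact hP.hom_I_eq_zero (by simp) h

variable (H) in
lemma exists_costdMap (lam : Λ) : ∃ i : H.costd lam →ₗ[S] H.I lam, Function.Injective i ∧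
    H.SupportedOn (Set.Iic lam) (H.costd lam) ∧
    ∀ V : Submodule S (H.I lam), H.SupportedOn (Set.Iic lam) V → V ≤ LinearMap.range i := by
  obtain ⟨V, ⟨e⟩, hV, hmax⟩ := H.costdSpec lam
  refine ⟨V.subtype ∘ₗ e.toLinearMap, V.injective_subtype.comp e.injective,
    (supportedOn_iff (M := ModuleCat.of S V).2 hV).of_injective e.injective, fun V' hV' => ?_⟩
  rw [LinearEquiv.range_comp, Submodule.range_subtype]
  exact hmax V' (supportedOn_iff (M := ModuleCat.of S V').1 hV')

lemma nonempty_costd_equiv_I (hlam : IsMax lam) : Nonempty (H.costd lam ≃ₗ[S] H.I lam) := by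
  obtain ⟨i, hi, -, hmax⟩ := H.exists_costdMap lam
  have htop := hmax ⊤ ((supportedOn_I hlam).of_injective (Submodule.injective_subtype _))
  exact ⟨.ofBijective i ⟨hi, LinearMap.range_eq_top.1 (top_le_iff.1 htop)⟩⟩

lemma ker_headMap_le_ker (hlam : IsMin lam) (hM : H.SupportedOn (Set.Iic lam) M)
    (h : H.P lam →ₗ[S] M) : LinearMap.ker (H.headMap lam) ≤ LinearMap.ker h := by
  obtain ⟨p, hp, hmin⟩ := H.exists_stdMap lam
  obtain ⟨e⟩ := H.nonempty_std_equiv_L hlam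
  have := IsSimpleModule.congr e
  have hp0 : p ≠ 0 := by
    have := IsSimpleModule.nontrivial S (H.std lam)
    exact LinearMap.ne_zero_of_surjective hp
  rw [← H.ker_eq_ker_headMap hp0]
  exact hmin _ ((hM.of_injective (LinearMap.range h).injective_subtype).of_injective
    h.quotKerEquivRange.injective)

lemma nonempty_costd_equiv_L (hlam : IsMin lam) : Nonempty (H.costd lam ≃ₗ[S] H.L lam) := by
  obtain ⟨i, hi, hs, hmax⟩ := H.exists_costdMap lam
  have hle : LinearMap.range (H.socleMap lam) ≤ LinearMap.range i :=
    hmax _ ((supportedOn_L Set.self_mem_Iic).of_surjective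
      (LinearMap.surjective_rangeRestrict (H.socleMap lam)))
  have hge : LinearMap.range i ≤ LinearMap.range (H.socleMap lam) := by
    rw [LinearMap.range_le_iff_comap]
    refine eq_top_of_forall_range_le (H := H) fun nu h => ?_
    rw [← Submodule.map_le_iff_le_comap, ← LinearMap.range_comp]
    by_cases hnu : nu ≤ lam
    · obtain rfl := hlam.eq_of_le hnu
      exact range_le_range_socleMap
        ((ker_headMap_le_ker hlam hs h).trans (LinearMap.ker_le_ker_comp h i))
    · simp [hs nu hnu h]
  exact ⟨(LinearEquiv.ofInjective i hi).trans <| (LinearEquiv.ofEq _ _ (hge.antisymm hle)).trans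
    (LinearEquiv.ofInjective _ (H.socleMap_injective lam)).symm⟩

end QHData

/-! ### Modules with a costandard filtration -/

section CostandardFiltrations

variable {H}

lemma HasFiltrationWithSections.snoc {M : ModuleCat.{0} S} {n : ℕ}
    {U : Submodule S M} {f : Fin (n + 1) → Submodule S U} {D : Fin n → ModuleCat.{0} S}
    (hU : HasFiltrationWithSections S (ModuleCat.of S U) n f D) {X : ModuleCat.{0} S}
    (e : (M ⧸ U) ≃ₗ[S] X) :
    HasFiltrationWithSections S M (n + 1)
      (Fin.snoc (α := fun _ => Submodule S M) (fun i => (f i).map U.subtype) ⊤)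
      (Fin.snoc (α := fun _ => ModuleCat.{0} S) D X) := by
  obtain ⟨hf, hbot, htop, hsec⟩ := hU
  have hlast : (f (Fin.last n)).map U.subtype = U := by rw [htop, Submodule.map_subtype_top]
  refine ⟨Fin.monotone_iff_le_succ.2 fun i => ?_, ?_, Fin.snoc_last _ _, fun i => ?_⟩
  · induction i using Fin.lastCases with
    | last => simp only [Fin.succ_last, Fin.snoc_last, le_top]
    | cast i =>
      simp only [← Fin.castSucc_succ, Fin.snoc_castSucc]
      exact Submodule.map_mono (hf Fin.castSucc_lt_succ.le)
  · rw [← Fin.castSucc_zero, Fin.snoc_castSucc, hbot, Submodule.map_bot]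
  · induction i using Fin.lastCases with
    | last =>
      rw [Fin.succ_last, Fin.snoc_castSucc, hlast, Fin.snoc_last (α := fun _ => Submodule S M),
        Fin.snoc_last]
      exact ⟨(subquotEquivOfEqTop U rfl).trans e⟩
    | cast i =>
      rw [← Fin.castSucc_succ, Fin.snoc_castSucc, Fin.snoc_castSucc, Fin.snoc_castSucc]
      obtain ⟨e'⟩ := hsec i
      obtain ⟨e''⟩ := nonempty_subquot_map_equiv U.injective_subtype (f i.castSucc) (f i.succ)
      exact ⟨e''.symm.trans e'⟩

lemma InCostdFilt.of_surjective {M : ModuleCat.{0} S} {lam : Λ} {g : M →ₗ[S] H.costd lam}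
    (hg : Function.Surjective g) (hker : InCostdFilt S H (ModuleCat.of S (LinearMap.ker g))) :
    InCostdFilt S H M := by
  obtain ⟨n, f, c, hf⟩ := hker
  have h := hf.snoc (D := H.costd ∘ c) (LinearMap.quotKerEquivOfSurjective g hg)
  rw [← Fin.comp_snoc H.costd c lam] at h
  exact ⟨n + 1, _, _, h⟩

lemma inCostdFilt_of_subsingleton (M : ModuleCat.{0} S) (_ : Subsingleton M) :
    InCostdFilt S H M :=
  ⟨0, fun _ => ⊥, Fin.elim0, fun _ _ _ => le_rfl, rfl, Subsingleton.elim _ _,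
    fun i => i.elim0⟩

lemma InCostdFilt.of_equiv {M N : ModuleCat.{0} S} (e : M ≃ₗ[S] N) (hM : InCostdFilt S H M) :
    InCostdFilt S H N := by
  obtain ⟨n, f, c, hf, hbot, htop, hsec⟩ := hM
  refine ⟨n, fun i => (f i).map e.toLinearMap, c, fun i j hij => Submodule.map_mono (hf hij),
    by simp only [hbot, Submodule.map_bot], by simp [htop], fun i => ?_⟩
  obtain ⟨e'⟩ := hsec i
  obtain ⟨e''⟩ := nonempty_subquot_map_equiv (g := e.toLinearMap) e.injective
    (f i.castSucc) (f i.succ)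
  exact ⟨e''.symm.trans e'⟩

lemma isExtensionClosed_inCostdFilt : IsExtensionClosed (InCostdFilt S H) where
  of_subsingleton := inCostdFilt_of_subsingleton
  of_surjective {M N} g hg hker hN := by
    obtain ⟨n, f, c, hf, hbot, htop, hsec⟩ := hN
    have hsec' (i : Fin n) : Nonempty (subquot S ((f i.castSucc).comap g) ((f i.succ).comap g)
        ≃ₗ[S] H.costd (c i)) := by
      obtain ⟨e⟩ := hsec i
      obtain ⟨e'⟩ := nonempty_subquot_comap_equiv (f i.castSucc) (B := f i.succ)
        (LinearMap.range_eq_top.2 hg ▸ le_top)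
      exact ⟨e'.trans e⟩
    refine InCostdFilt.of_equiv (M := ModuleCat.of S ((f (Fin.last n)).comap g))
      (LinearEquiv.ofTop _ (by rw [htop, Submodule.comap_top])) <|
      filtration_induction (fun i j hij => Submodule.comap_mono (hf hij)) hsec'
        InCostdFilt.of_equiv (fun _ _ _ => InCostdFilt.of_surjective) ?_
    rwa [hbot, Submodule.comap_bot]

lemma inCostdFilt_costd (lam : Λ) : InCostdFilt S H (H.costd lam) :=
  InCostdFilt.of_surjective (g := LinearMap.id) Function.surjective_id <|
    inCostdFilt_of_subsingleton _ <|
      Submodule.subsingleton_iff_eq_bot.2 LinearMap.ker_id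

lemma InCostdFilt.gfd_eq_zero {M : ModuleCat.{0} S} (hM : InCostdFilt S H M) :
    gfd S H M = 0 :=
  Nat.le_zero.1 <| Nat.sInf_le ⟨fun _ => M, fun _ => LinearMap.id,
    ⟨Function.injective_id, Function.surjective_id, fun i => i.elim0⟩, rfl, fun _ => hM⟩

lemma inCostdFilt_of_supportedOn_isMin {M : Type} [AddCommGroup M] [Module S M]
    (hM : IsFiniteLength S M) (hs : H.SupportedOn {lam | IsMin lam} M) :
    InCostdFilt S H (ModuleCat.of S M) :=
  isExtensionClosed_inCostdFilt.of_supportedOn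
    (fun lam hlam => let ⟨e⟩ := H.nonempty_costd_equiv_L hlam
      (inCostdFilt_costd lam).of_equiv e) hM hs

lemma inCostdFilt_I {lam : Λ} (hlam : IsMax lam) : InCostdFilt S H (H.I lam) :=
  let ⟨e⟩ := H.nonempty_costd_equiv_I hlam
  (inCostdFilt_costd lam).of_equiv e

end CostandardFiltrations

/-! ### Approximation by sums of injective hulls -/

namespace QHData

/-- The class of finite direct sums of injective hulls `I(λ)` with `λ ∉ s`. -/
inductive IsInjSum (s : Set Λ) : ModuleCat.{0} S → Prop
  | zero : IsInjSum s (ModuleCat.of S PUnit)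
  | hull {lam : Λ} : lam ∉ s → IsInjSum s (H.I lam)
  | prod {G G' : ModuleCat.{0} S} :
      IsInjSum s G → IsInjSum s G' → IsInjSum s (ModuleCat.of S (G × G'))

variable {H} {s : Set Λ} {lam : Λ} {G : ModuleCat.{0} S}

namespace IsInjSum

lemma injective (hG : H.IsInjSum s G) : Module.Injective S G := by
  induction hG with
  | zero => exact ⟨fun _ _ _ _ _ _ _ _ _ => ⟨0, fun _ => Subsingleton.elim _ _⟩⟩
  | hull => exact H.injective_I _
  | prod _ _ ih ih' =>
    refine ⟨fun X Y _ _ _ _ i hi g => ?_⟩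
    obtain ⟨a, ha⟩ := ih.out i hi (LinearMap.fst S _ _ ∘ₗ g)
    obtain ⟨b, hb⟩ := ih'.out i hi (LinearMap.snd S _ _ ∘ₗ g)
    exact ⟨a.prod b, fun x => Prod.ext (ha x) (hb x)⟩

lemma finite (hI : ∀ lam ∉ s, Module.Finite S (H.I lam)) (hG : H.IsInjSum s G) :
    Module.Finite S G := by
  induction hG with
  | zero => exact inferInstanceAs (Module.Finite S PUnit)
  | hull hlam => exact hI _ hlam
  | @prod G G' _ _ _ _ => exact inferInstanceAs (Module.Finite S (G × G'))

lemma hom_eq_zero (hG : H.IsInjSum s G) (hM : H.SupportedOn s M) (h : M →ₗ[S] G) : h = 0 := by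
  induction hG with
  | zero => exact LinearMap.ext fun _ => Subsingleton.elim _ _
  | hull hlam => exact hM.hom_I_eq_zero hlam h
  | prod _ _ ih ih' =>
    exact LinearMap.ext fun x => Prod.ext (LinearMap.congr_fun (ih (LinearMap.fst S _ _ ∘ₗ h)) x)
      (LinearMap.congr_fun (ih' (LinearMap.snd S _ _ ∘ₗ h)) x)

lemma inCostdFilt (hs : ∀ lam ∉ s, IsMax lam) (hG : H.IsInjSum s G) : InCostdFilt S H G := by
  induction hG with
  | zero => exact inCostdFilt_of_subsingleton _ (inferInstanceAs (Subsingleton PUnit))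
  | hull hlam => exact inCostdFilt_I (hs _ hlam)
  | @prod G G' _ _ ih ih' =>
    refine isExtensionClosed_inCostdFilt.of_surjective (M := ModuleCat.of S (G × G'))
      (LinearMap.snd S G G') LinearMap.snd_surjective (.of_equiv ?_ ih) ih'
    exact (LinearEquiv.ofInjective _ LinearMap.inl_injective).trans
      (LinearEquiv.ofEq _ _ (LinearMap.range_inl S G G'))

end IsInjSum

variable (H) in
/-- `f` induces an isomorphism in the quotient of the category of modules by the Serre
subcategory of modules supported on `s`. Since that quotient is the category of modules over
the endomorphism ring of `⨁ ν ∉ s, P(ν)`, this is expressed through the functors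
`Hom(P(ν), -)` for `ν ∉ s`. -/
def IsIsoOff (s : Set Λ) (f : M →ₗ[S] N) : Prop :=
  ∀ nu ∉ s, Function.Bijective fun h : H.P nu →ₗ[S] M => f ∘ₗ h

lemma IsIsoOff.supportedOn_ker {f : M →ₗ[S] N} (hf : H.IsIsoOff s f) :
    H.SupportedOn s (LinearMap.ker f) := by
  intro nu hnu h
  refine (LinearMap.cancel_left (LinearMap.ker f).injective_subtype).1 ((hf nu hnu).1 ?_)
  exact LinearMap.ext fun x => by simp

lemma IsIsoOff.supportedOn_coker {f : M →ₗ[S] N} (hf : H.IsIsoOff s f) :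
    H.SupportedOn s (N ⧸ LinearMap.range f) := by
  intro nu hnu h
  obtain ⟨t, rfl⟩ := Module.projective_lifting_property (Submodule.mkQ _) h
    (Submodule.mkQ_surjective _)
  obtain ⟨u, rfl⟩ := (hf nu hnu).2 t
  rw [← LinearMap.comp_assoc, LinearMap.range_mkQ_comp, LinearMap.zero_comp]

lemma isIsoOff_socleMap (hs : ∀ nu ∉ s, IsMax nu) (hlam : lam ∉ s) :
    H.IsIsoOff s (H.socleMap lam) := by
  refine fun nu hnu => ⟨fun h h' => (LinearMap.cancel_left (H.socleMap_injective lam)).1,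
    fun t => ?_⟩
  have hker : LinearMap.ker (H.headMap nu) ≤ LinearMap.ker t := by
    have hzero := (H.supportedOn_ker_headMap (hs nu hnu)).hom_I_eq_zero
      (hs lam hlam).not_lt (t ∘ₗ (LinearMap.ker (H.headMap nu)).subtype)
    exact fun x hx => LinearMap.congr_fun hzero ⟨x, hx⟩
  let e := LinearEquiv.ofInjective _ (H.socleMap_injective lam)
  refine ⟨e.symm.toLinearMap ∘ₗ t.codRestrict _ fun x =>
    range_le_range_socleMap hker (LinearMap.mem_range_self t x), LinearMap.ext fun x => ?_⟩
  exact congrArg Subtype.val (e.apply_symm_apply _)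

lemma isExtensionClosed_exists_isIsoOff :
    IsExtensionClosed fun M : ModuleCat.{0} S =>
      ∃ G, H.IsInjSum s G ∧ ∃ f : M →ₗ[S] G, H.IsIsoOff s f where
  of_subsingleton M _ := ⟨_, .zero, 0, fun _ _ =>
    ⟨fun _ _ _ => LinearMap.ext fun _ => Subsingleton.elim _ _,
      fun _ => ⟨0, LinearMap.ext fun _ => Subsingleton.elim _ _⟩⟩⟩
  of_surjective {M N} g hg := by
    rintro ⟨G, hG, f, hf⟩ ⟨G', hG', f', hf'⟩
    obtain ⟨u, hu⟩ := hG.injective.out (LinearMap.ker g).subtype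
      (LinearMap.ker g).injective_subtype f
    obtain rfl : u ∘ₗ (LinearMap.ker g).subtype = f := LinearMap.ext hu
    exact ⟨_, hG.prod hG', u.prod (f' ∘ₗ g), fun nu hnu =>
      bijective_comp_prod hg (hf nu hnu) (hf' nu hnu)⟩

lemma exists_isIsoOff (hs : ∀ nu ∉ s, IsMax nu) (hM : IsFiniteLength S M) :
    ∃ G, H.IsInjSum s G ∧ ∃ f : M →ₗ[S] G, H.IsIsoOff s f := by
  refine (isExtensionClosed_exists_isIsoOff (s := s)).of_supportedOn (H := H) (s := Set.univ)
    (fun lam _ => ?_) hM fun nu hnu => (hnu (Set.mem_univ nu)).elim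
  by_cases hlam : lam ∈ s
  · refine ⟨_, .zero, 0, fun nu hnu => ⟨fun h h' _ => ?_, fun t => ⟨0, ?_⟩⟩⟩
    · rw [supportedOn_L hlam nu hnu h, supportedOn_L hlam nu hnu h']
    · exact LinearMap.ext fun _ => Subsingleton.elim _ _
  · exact ⟨_, .hull hlam, H.socleMap lam, isIsoOff_socleMap hs hlam⟩

lemma IsIsoOff.inCostdFilt_of_surjective {Q G : ModuleCat.{0} S}
    [Module.Finite S Q] {f : Q →ₗ[S] G} (hf : H.IsIsoOff {lam | IsMin lam} f)
    (hsurj : Function.Surjective f) (hG : InCostdFilt S H G) : InCostdFilt S H Q :=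
  isExtensionClosed_inCostdFilt.of_surjective f hsurj
    (inCostdFilt_of_supportedOn_isMin
      ((H.isFiniteLength_of_finite Q).of_injective (Submodule.injective_subtype _))
      hf.supportedOn_ker) hG

end QHData

/-! ### Extension groups and projective dimension -/

section DimensionShifting

open Abelian

universe w v u

variable {C : Type u} [Category.{v} C] [Abelian C] [HasExt.{w} C] {X : ShortComplex C}
  (hX : X.ShortExact)
include hX

lemma nontrivial_ext_one_of_hom_eq_zero {A : C} {φ : X.X₁ ⟶ A} (hφ : φ ≠ 0)
    (hA : ∀ ψ : X.X₂ ⟶ A, ψ = 0) : Nontrivial (Ext X.X₃ A 1) := by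
  refine nontrivial_of_ne (hX.extClass.comp (Ext.mk₀ φ) (add_zero 1)) 0 fun h => hφ ?_
  obtain ⟨x, hx⟩ := Ext.contravariant_sequence_exact₁ hX A _ _ h
  obtain ⟨ψ, rfl⟩ := (Ext.mk₀_bijective _ _).2 x
  rwa [hA ψ, Ext.mk₀_zero, Ext.comp_zero, eq_comm, Ext.mk₀_eq_zero_iff] at hx

lemma nontrivial_ext_succ_of_injective [Injective X.X₂] (A : C) (n : ℕ)
    [Nontrivial (Ext A X.X₃ (n + 1))] : Nontrivial (Ext A X.X₁ (n + 2)) := by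
  obtain ⟨a, ha⟩ := exists_ne (0 : Ext A X.X₃ (n + 1))
  refine nontrivial_of_ne (a.comp hX.extClass rfl) 0 fun h => ha ?_
  obtain ⟨x, rfl⟩ := Ext.covariant_sequence_exact₃ A hX a rfl h
  rw [Ext.eq_zero_of_injective x, Ext.zero_comp]

lemma nontrivial_ext_X₂_right {A : C} {n : ℕ} [HasProjectiveDimensionLT A (n + 1)]
    [Nontrivial (Ext A X.X₃ n)] : Nontrivial (Ext A X.X₂ n) := by
  obtain ⟨a, ha⟩ := exists_ne (0 : Ext A X.X₃ n)
  obtain ⟨x, rfl⟩ := Ext.covariant_sequence_exact₃ A hX a rfl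
    (Ext.eq_zero_of_hasProjectiveDimensionLT _ (n + 1) le_rfl)
  refine nontrivial_of_ne x 0 ?_
  rintro rfl
  exact ha (by rw [Ext.zero_comp])

lemma nontrivial_ext_X₂_left {A : C} {n : ℕ} [HasProjectiveDimensionLT X.X₃ (n + 1)]
    [Nontrivial (Ext X.X₁ A n)] : Nontrivial (Ext X.X₂ A n) := by
  obtain ⟨a, ha⟩ := exists_ne (0 : Ext X.X₁ A n)
  obtain ⟨x, rfl⟩ := Ext.contravariant_sequence_exact₁ hX A a (add_comm 1 n)
    (Ext.eq_zero_of_hasProjectiveDimensionLT _ (n + 1) le_rfl)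
  refine nontrivial_of_ne x 0 ?_
  rintro rfl
  exact ha (by rw [Ext.comp_zero])

end DimensionShifting

/-- `extNe` is about the left derived functors of `Hom(-, B)`; they are compared with the `Ext` of
the derived category by computing both from a projective resolution of `A`. -/
lemma extNe_of_nontrivial_ext {A B : ModuleCat.{0} S} {n : ℕ}
    (h : Nontrivial (Abelian.Ext.{0} A B (n + 1))) : extNe S A B (n + 1) := by
  by_contra hc
  have hsub : Subsingleton (((Ext ℤ (ModuleCat.{0} S) (n + 1)).obj (Opposite.op A)).obj B) :=
    not_nontrivial_iff_subsingleton.1 hc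
  obtain ⟨a, ha⟩ := exists_ne (0 : Abelian.Ext.{0} A B (n + 1))
  let R := ProjectiveResolution.of A
  have hexact : Limits.IsZero ((R.complex.linearYonedaObj ℤ B).homology (n + 1)) :=
    (ModuleCat.isZero_of_subsingleton _).of_iso (R.isoExt (R := ℤ) (n + 1) B).symm
  rw [← HomologicalComplex.exactAt_iff_isZero_homology,
    HomologicalComplex.exactAt_iff' _ n (n + 1) (n + 2) (by simp) (by simp),
    ShortComplex.moduleCat_exact_iff] at hexact
  obtain ⟨f, hf, rfl⟩ := R.extMk_surjective a (n + 2) rfl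
  exact ha ((R.extMk_eq_zero_iff f (n + 2) rfl hf n rfl).2 (hexact f hf))

lemma isExtensionClosed_hasProjectiveDimensionLT (n : ℕ) :
    IsExtensionClosed fun M : ModuleCat.{0} S => HasProjectiveDimensionLT M n where
  of_subsingleton M _ :=
    have := (ModuleCat.isZero_of_subsingleton M).hasProjectiveDimensionLT_zero
    hasProjectiveDimensionLT_of_ge M 0 n (Nat.zero_le n)
  of_surjective _ hg hker hN :=
    (LinearMap.shortExact_shortComplexKer hg).hasProjectiveDimensionLT_X₂ n hker hN

lemma hasProjectiveDimensionLT_one_of_projective (M : ModuleCat.{0} S) [Module.Projective S M] :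
    HasProjectiveDimensionLT M 1 :=
  projective_iff_hasProjectiveDimensionLT_one.1 ((IsProjective.iff_projective M).1 inferInstance)

lemma hasProjectiveDimensionLT_succ_of_surjective {M N : ModuleCat.{0} S} [Module.Projective S M]
    {n : ℕ} {g : M →ₗ[S] N} (hg : Function.Surjective g)
    (hker : HasProjectiveDimensionLT (ModuleCat.of S (LinearMap.ker g)) (n + 1)) :
    HasProjectiveDimensionLT N (n + 2) :=
  have := hasProjectiveDimensionLT_one_of_projective M
  (LinearMap.shortExact_shortComplexKer hg).hasProjectiveDimensionLT_X₃ (n + 1) hker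
    (hasProjectiveDimensionLT_of_ge M 1 (n + 2) (by lia))

namespace QHData

lemma hasProjectiveDimensionLT_two_L {mu : Λ} (hmu : IsMin mu) (hmax : ∀ nu > mu, IsMax nu) :
    HasProjectiveDimensionLT (H.L mu) 2 := by
  have hp := isExtensionClosed_hasProjectiveDimensionLT (S := S)
  have hstd (nu : Λ) (hnu : nu > mu) : HasProjectiveDimensionLT (H.std nu) 1 :=
    let ⟨e⟩ := H.nonempty_P_equiv_std (hmax nu hnu)
    (hp 1).of_equiv e (hasProjectiveDimensionLT_one_of_projective _)
  obtain ⟨K, hK, ⟨e⟩⟩ := (hp 1).exists_submodule_P hstd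
  obtain ⟨e'⟩ := H.nonempty_std_equiv_L hmu
  refine hasProjectiveDimensionLT_succ_of_surjective (M := H.P mu) (n := 0)
    (g := (e.trans e').toLinearMap ∘ₗ K.mkQ)
    ((e.trans e').surjective.comp K.mkQ_surjective) ?_
  rwa [LinearEquiv.ker_comp, Submodule.ker_mkQ]

variable {H} (hΛ : ∀ lam : Λ, IsMin lam ∨ IsMax lam) (hM : IsFiniteLength S M)
include hΛ hM

lemma SupportedOn.hasProjectiveDimensionLT_two (hs : H.SupportedOn {lam | IsMin lam} M) :
    HasProjectiveDimensionLT (ModuleCat.of S M) 2 :=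
  (isExtensionClosed_hasProjectiveDimensionLT 2).of_supportedOn
    (fun _ hmu => H.hasProjectiveDimensionLT_two_L hmu
      fun nu hnu => (hΛ nu).resolve_left hnu.not_isMin) hM hs

lemma hasProjectiveDimensionLT_three (H : QHData S Λ) :
    HasProjectiveDimensionLT (ModuleCat.of S M) 3 := by
  refine (isExtensionClosed_hasProjectiveDimensionLT 3).of_supportedOn (H := H) (s := Set.univ)
    (fun lam _ => ?_) hM fun nu hnu => (hnu (Set.mem_univ nu)).elim
  by_cases hmin : IsMin lam
  · have := H.hasProjectiveDimensionLT_two_L hmin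
      fun nu hnu => (hΛ nu).resolve_left hnu.not_isMin
    exact hasProjectiveDimensionLT_of_ge (H.L lam) 2 3 (by lia)
  · have hmax := (hΛ lam).resolve_left hmin
    refine hasProjectiveDimensionLT_succ_of_surjective (n := 1) (H.headMap_surjective lam) ?_
    refine SupportedOn.hasProjectiveDimensionLT_two (H := H) hΛ ?_ ?_
    · exact (H.isFiniteLength_P lam).of_injective (Submodule.injective_subtype _)
    · exact (H.supportedOn_ker_headMap hmax).mono
        fun nu hnu => (hΛ nu).resolve_right (not_isMax_of_lt hnu)

end QHData

/-! ### The duality -/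

variable {H}

namespace Duality

variable (d : Duality S H) {X Y G C : ModuleCat.{0} S} [Module.Finite S X] [Module.Finite S Y]
  [Module.Finite S G] [Module.Finite S C]

instance finite_D : Module.Finite S (d.D X) := d.finD X inferInstance

lemma surjective_Dmap {f : X →ₗ[S] Y} (hf : Function.Injective f) :
    Function.Surjective (d.Dmap f) :=
  (d.Dexact (C := ModuleCat.of S (Y ⧸ LinearMap.range f)) inferInstance inferInstance
    (inferInstanceAs (Module.Finite S (Y ⧸ LinearMap.range f))) f (LinearMap.range f).mkQ hf
    (Submodule.mkQ_surjective _) (Submodule.ker_mkQ _).symm).2.1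

lemma Dmap_ker_subtype_exact {g : X →ₗ[S] Y} (hg : Function.Surjective g) :
    Function.Injective (d.Dmap g) ∧
      Function.Surjective
        (d.Dmap (A := ModuleCat.of S (LinearMap.ker g)) (LinearMap.ker g).subtype) ∧
      LinearMap.range (d.Dmap g) = LinearMap.ker
        (d.Dmap (A := ModuleCat.of S (LinearMap.ker g)) (LinearMap.ker g).subtype) :=
  have := H.isArtinianRing
  d.Dexact (inferInstanceAs (Module.Finite S (LinearMap.ker g))) inferInstance inferInstance _ g
    (LinearMap.ker g).injective_subtype hg (Submodule.range_subtype _)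

lemma injective_Dmap {g : X →ₗ[S] Y} (hg : Function.Surjective g) :
    Function.Injective (d.Dmap g) :=
  (d.Dmap_ker_subtype_exact hg).1

lemma shortExact_Dmap {g : X →ₗ[S] Y} (hg : Function.Surjective g) :
    ∃ w, (ShortComplex.mk (ModuleCat.ofHom (d.Dmap g))
      (ModuleCat.ofHom (d.Dmap (A := ModuleCat.of S (LinearMap.ker g))
        (LinearMap.ker g).subtype)) w).ShortExact := by
  obtain ⟨hinj, hsurj, hexact⟩ := d.Dmap_ker_subtype_exact hg
  have hex := LinearMap.exact_iff.2 hexact.symm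
  exact ⟨ModuleCat.hom_ext (LinearMap.ext hex.apply_apply_eq_zero),
    ModuleCat.shortComplex_shortExact _ hex hinj hsurj⟩

lemma Dmap_zero : d.Dmap (0 : X →ₗ[S] Y) = 0 := by
  have := d.Dadd inferInstance inferInstance (0 : X →ₗ[S] Y) 0
  rwa [add_zero, left_eq_add] at this

lemma supportedOn_D {s : Set Λ} (hX : H.SupportedOn s X) : H.SupportedOn s (d.D X) := by
  intro nu hnu h
  by_contra hh
  have := H.isArtinianRing
  have := H.finiteL nu
  obtain ⟨q, hq⟩ := H.exists_surjective_range_L hh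
  have hZ : Module.Finite S (ModuleCat.of S (LinearMap.range h)) :=
    inferInstanceAs (Module.Finite S (LinearMap.range h))
  have hsurj : Function.Surjective
      (d.Dmap (A := ModuleCat.of S (LinearMap.range h)) (LinearMap.range h).subtype) :=
    d.surjective_Dmap (LinearMap.range h).injective_subtype
  obtain ⟨e⟩ := d.Dinvol X inferInstance
  obtain ⟨eL⟩ := d.DL nu
  have hZs := (hX.of_injective e.injective).of_surjective hsurj
  have hLs := hZs.of_injective (d.injective_Dmap (X := ModuleCat.of S (LinearMap.range h)) hq)
  exact hnu (hLs.mem_of_surjective (f := eL.toLinearMap) eL.surjective)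

lemma hom_D_eq_zero (hG : ∀ h : d.D C →ₗ[S] G, h = 0) (φ : d.D G →ₗ[S] C) : φ = 0 := by
  obtain ⟨e⟩ := d.Dinvol G inferInstance
  apply (d.Dfull inferInstance inferInstance).1
  refine Eq.trans ?_ d.Dmap_zero.symm
  exact (LinearMap.cancel_left e.injective).1
    ((hG (e.toLinearMap ∘ₗ d.Dmap φ)).trans (LinearMap.comp_zero _).symm)

lemma exists_hom_D_ne_zero [Nontrivial C] : ∃ φ : d.D C →ₗ[S] C, φ ≠ 0 := by
  have := H.isArtinianRing
  obtain ⟨K, hK⟩ := IsAtomic.exists_atom (Submodule S C)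
  have hKsimple : IsSimpleModule S K := isSimpleModule_iff_isAtom.2 hK
  obtain ⟨mu, ⟨e⟩⟩ := H.exists_equiv_L K
  obtain ⟨eL⟩ := d.DL mu
  have := H.finiteL mu
  let j : H.L mu →ₗ[S] C := K.subtype ∘ₗ e.symm.toLinearMap
  have hj : Function.Injective j := K.injective_subtype.comp e.symm.injective
  have hsurj : Function.Surjective (eL.toLinearMap ∘ₗ d.Dmap j) :=
    eL.surjective.comp (d.surjective_Dmap hj)
  have := IsSimpleModule.nontrivial S (H.L mu)
  exact ⟨j ∘ₗ eL.toLinearMap ∘ₗ d.Dmap j, fun h => LinearMap.ne_zero_of_surjective hsurj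
    ((LinearMap.cancel_left hj).1 (h.trans (LinearMap.comp_zero j).symm))⟩

lemma injective_D [Module.Projective S X] : Module.Injective S (d.D X) := by
  have := H.isArtinianRing
  obtain ⟨e⟩ := d.Dinvol X inferInstance
  have := Module.Projective.of_equiv e.symm
  refine Module.Baer.injective fun I g => ?_
  let A := ModuleCat.of S I
  let B := ModuleCat.of S S
  have hA : Module.Finite S A := inferInstanceAs (Module.Finite S I)
  have hB : Module.Finite S B := inferInstanceAs (Module.Finite S S)
  let ι : A →ₗ[S] B := I.subtype
  obtain ⟨w, hw⟩ := Module.projective_lifting_property (d.Dmap ι) (d.Dmap (A := A) g)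
    (d.surjective_Dmap I.injective_subtype)
  obtain ⟨v, rfl⟩ := (d.Dfull hB (d.finite_D (X := X))).2 w
  have hv : v ∘ₗ ι = g := by
    apply (d.Dfull hA (d.finite_D (X := X))).1
    exact (d.Dcomp hA hB d.finite_D ι v).trans hw
  exact ⟨v, fun x hx => LinearMap.congr_fun hv ⟨x, hx⟩⟩

include d in
lemma finite_I (lam : Λ) : Module.Finite S (H.I lam) := by
  have := H.isArtinianRing
  have := H.finiteL lam
  have := (isFiniteLength_iff_isNoetherian_isArtinian.1 (H.isFiniteLength_P lam)).1
  have := d.injective_D (X := H.P lam)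
  obtain ⟨e⟩ := d.DL lam
  obtain ⟨u, hu⟩ := Module.Injective.out (Q := d.D (H.P lam)) (H.socleMap lam)
    (H.socleMap_injective lam) (d.Dmap (H.headMap lam) ∘ₗ e.symm.toLinearMap)
  have hinj : Function.Injective (d.Dmap (H.headMap lam) ∘ₗ e.symm.toLinearMap) :=
    (d.injective_Dmap (H.headMap_surjective lam)).comp e.symm.injective
  refine Module.Finite.of_injective u (LinearMap.ker_eq_bot.1 ?_)
  by_contra hne
  refine H.inf_range_socleMap_ne_bot hne ((Submodule.eq_bot_iff _).2 ?_)
  rintro _ ⟨hx, y, rfl⟩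
  rw [(injective_iff_map_eq_zero _).1 hinj y ((hu y).symm.trans hx), map_zero]

open Abelian

lemma nontrivial_ext_D_ker {G C : ModuleCat.{0} S} [Module.Finite S G] [Module.Finite S C]
    [Module.Injective S G] {q : G →ₗ[S] C} (hq : Function.Surjective q)
    (hG : ∀ ψ : d.D G →ₗ[S] C, ψ = 0) {φ : d.D C →ₗ[S] C} (hφ : φ ≠ 0) :
    Nontrivial (Ext.{0} (d.D (.of S (LinearMap.ker q))) (.of S (LinearMap.ker q)) 2) := by
  obtain ⟨w, hD⟩ := d.shortExact_Dmap hq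
  have hGinj : Injective G := Module.injective_object_of_injective_module S G
  have hone : Nontrivial (Ext.{0} (d.D (.of S (LinearMap.ker q))) C 1) :=
    nontrivial_ext_one_of_hom_eq_zero hD (φ := ModuleCat.ofHom φ)
      (fun h => hφ (congrArg ModuleCat.Hom.hom h)) fun ψ => ModuleCat.hom_ext (hG ψ.hom)
  exact nontrivial_ext_succ_of_injective (LinearMap.shortExact_shortComplexKer hq) _ 0

lemma nontrivial_ext_D_of_surjective (hΛ : ∀ lam : Λ, IsMin lam ∨ IsMax lam)
    {X Y : ModuleCat.{0} S} [Module.Finite S X] [Module.Finite S Y] {p : X →ₗ[S] Y}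
    (hp : Function.Surjective p) (hY : Nontrivial (Ext.{0} (d.D Y) Y 2)) :
    Nontrivial (Ext.{0} (d.D X) X 2) := by
  have hpd (A : ModuleCat.{0} S) [Module.Finite S A] : HasProjectiveDimensionLT A 3 :=
    QHData.hasProjectiveDimensionLT_three hΛ (H.isFiniteLength_of_finite A) H
  have := H.isArtinianRing
  have hK : Module.Finite S (ModuleCat.of S (LinearMap.ker p)) :=
    inferInstanceAs (Module.Finite S (LinearMap.ker p))
  obtain ⟨w, hD⟩ := d.shortExact_Dmap hp
  have := hpd (d.D Y)
  have := hpd (d.D (.of S (LinearMap.ker p)))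
  have hYX : Nontrivial (Ext.{0} (d.D Y) X 2) :=
    nontrivial_ext_X₂_right (LinearMap.shortExact_shortComplexKer hp)
  exact nontrivial_ext_X₂_left hD

end Duality

lemma isMin_or_isMax (hA : StrongPropA S H) (hgfd : gfdAlg S H = 1) (lam : Λ) :
    IsMin lam ∨ IsMax lam := by
  simp only [isMin_iff_forall_not_lt, isMax_iff_forall_not_lt]
  by_contra! h
  obtain ⟨⟨mu, hmu⟩, nu, hnu⟩ := h
  have hbdd : BddAbove {d | ∃ M : ModuleCat.{0} S, Module.Finite S M ∧ gfd S H M = d} := by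
    by_contra hunbdd
    exact zero_ne_one ((Nat.sSup_of_not_bddAbove hunbdd).symm.trans hgfd)
  have hmulam := hA mu lam hmu
  have hlamnu := hA lam nu hnu
  have hnu_le : gfd S H (H.L nu) ≤ gfdAlg S H := le_csSup hbdd ⟨_, H.finiteL nu, rfl⟩
  lia

end QHPaper

open QHPaper in
theorem stmt0_general {S Λ : Type} [Ring S] [Fintype Λ] [PartialOrder Λ] (QH : QHData S Λ)
    (dual : Duality S QH) (hΛ : ∀ lam : Λ, IsMin lam ∨ IsMax lam) (Q : ModuleCat.{0} S)
    (hQfin : Module.Finite S Q) (hQ : ¬ InCostdFilt S QH Q) : extNe S (dual.D Q) Q 2 := by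
  have := QH.isArtinianRing
  have hmax : ∀ lam ∉ {lam : Λ | IsMin lam}, IsMax lam := fun lam => (hΛ lam).resolve_left
  obtain ⟨G, hG, f, hf⟩ := QH.exists_isIsoOff hmax (QH.isFiniteLength_of_finite Q)
  have := hG.injective
  have := hG.finite fun lam _ => dual.finite_I lam
  let C := ModuleCat.of S (G ⧸ LinearMap.range f)
  have hCfin : Module.Finite S C := inferInstanceAs (Module.Finite S (G ⧸ LinearMap.range f))
  have hC : Nontrivial C := Submodule.Quotient.nontrivial_iff.2 fun htop =>
    hQ (hf.inCostdFilt_of_surjective (LinearMap.range_eq_top.1 htop) (hG.inCostdFilt hmax))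
  obtain ⟨φ, hφ⟩ := dual.exists_hom_D_ne_zero (C := C)
  have hrange := dual.nontrivial_ext_D_ker (LinearMap.range f).mkQ_surjective
    (dual.hom_D_eq_zero (C := C) (hG.hom_eq_zero (dual.supportedOn_D hf.supportedOn_coker))) hφ
  rw [Submodule.ker_mkQ] at hrange
  exact extNe_of_nontrivial_ext
    (dual.nontrivial_ext_D_of_surjective hΛ f.surjective_rangeRestrict hrange)

open QHPaper in
/-- Let `S` be a quasi-hereditary algebra with a simple-preserving duality `°`
satisfying strong property A and with `gfd(S) = 1`. Then for every finite-dimensional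
`S`-module `Q` with `gfd(Q) = 1` one has `Ext²_S(Q°, Q) ≠ 0`. -/
theorem stmt0 (k S Λ : Type) [Field k] [Ring S] [Algebra k S] [FiniteDimensional k S]
    [Fintype Λ] [PartialOrder Λ]
    (QH : QHData S Λ) (dual : Duality S QH)
    (hA : StrongPropA S QH) (hgfd : gfdAlg S QH = 1)
    (Q : ModuleCat.{0} S) (hQfin : Module.Finite S ↥Q) (hQ : gfd S QH Q = 1) :
    extNe S (dual.D Q) Q 2 :=
  stmt0_general QH dual (isMin_or_isMax hA hgfd) Q hQfin fun hfilt =>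
    one_ne_zero (hQ.symm.trans hfilt.gfd_eq_zero)
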